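/- arXiv:1605.04193 — 2 statements merged into one kernel-verified Lean document; each statement's English description precedes it below -/
import Mathlib

section
/- Let Ω ⊂ ℝ² be a nonempty bounded open set, B a smooth real-valued function with B(x) > 0 for all x ∈ Ω, ψ continuous on the closure of Ω, smooth on Ω, with Δψ = B in Ω and ψ = 0 on ∂Ω, ψ_min := inf_Ω ψ, and A = (−∂₂ψ, ∂₁ψ) the canonical vector potential. Then for every h > 0 the lowest Dirichlet Pauli eigenvalue satisfies λ_{P₋}(h) ≥ h² λ^D(Ω) exp(2ψ_min/h). -/
/-!
The Pauli operator factorises. With `P_j = h∂_j − iA_j`, the commutator `[P₁, P₂] = −ihB` gives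
`Q_h(u) = ∫_Ω |P₁u + iP₂u|²` for test functions `u` (`pauliQ_eq`): the integrands differ by the
divergence of a compactly supported field. For `A = (−∂₂ψ, ∂₁ψ)` the gauge change
`v = e^{ψ/h} u` turns `P₁ + iP₂` into `h(∂₁ + i∂₂)`, namely
`h(∂₁v + i∂₂v) = e^{ψ/h}(P₁u + iP₂u)` (`gauge_identity`).

Since `Δψ = B > 0` and `ψ = 0` on the boundary, the maximum principle gives `ψ ≤ 0` (`psi_nonpos`),
so `Q_h(u) ≥ h² ∫ |∂₁v + i∂₂v|²`. The factorisation with `A = 0` identifies the last integral with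
`∫ |∇v|²` (`dirichlet_eq`), which is at least `λ^D ∫ |v|²`, and
`∫ |v|² = ∫ e^{2ψ/h}|u|² ≥ e^{2ψ_min/h} ∫ |u|²`.
-/

open MeasureTheory Filter Topology

noncomputable section

abbrev E2 : Type := EuclideanSpace ℝ (Fin 2)

/-- Partial derivative of a complex-valued function in the `i`-th coordinate direction. -/
def pdC (i : Fin 2) (f : E2 → ℂ) (x : E2) : ℂ :=
  fderiv ℝ f x (EuclideanSpace.single i 1)

/-- Partial derivative of a real-valued function in the `i`-th coordinate direction. -/
def pdR (i : Fin 2) (f : E2 → ℝ) (x : E2) : ℝ :=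
  fderiv ℝ f x (EuclideanSpace.single i 1)

/-- The Laplacian `Δf = ∂₁²f + ∂₂²f`. -/
def lapl (f : E2 → ℝ) (x : E2) : ℝ :=
  pdR 0 (pdR 0 f) x + pdR 1 (pdR 1 f) x

/-- The Pauli quadratic form
`Q_h(u) = ∫_Ω (|h∂₁u − iA₁u|² + |h∂₂u − iA₂u|²) dx − h∫_Ω B|u|² dx`. -/
def pauliQ (Ω : Set E2) (A₁ A₂ B : E2 → ℝ) (h : ℝ) (u : E2 → ℂ) : ℝ :=
  (∫ x in Ω, (‖(h : ℂ) * pdC 0 u x - Complex.I * (A₁ x : ℂ) * u x‖ ^ 2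
      + ‖(h : ℂ) * pdC 1 u x - Complex.I * (A₂ x : ℂ) * u x‖ ^ 2))
    - h * ∫ x in Ω, B x * ‖u x‖ ^ 2

/-- `u ∈ C_c^∞(Ω; ℂ)`. -/
def IsCptSmoothIn (Ω : Set E2) (u : E2 → ℂ) : Prop :=
  ContDiff ℝ (⊤ : ℕ∞) u ∧ HasCompactSupport u ∧ tsupport u ⊆ Ω

/-- The lowest Dirichlet Pauli eigenvalue
`λ_{P₋}(h) = inf { Q_h(u)/∫_Ω|u|² : 0 ≠ u ∈ C_c^∞(Ω;ℂ) }`. -/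
def lambdaP (Ω : Set E2) (A₁ A₂ B : E2 → ℝ) (h : ℝ) : ℝ :=
  sInf { r | ∃ u : E2 → ℂ, IsCptSmoothIn Ω u ∧ u ≠ 0 ∧
    r = pauliQ Ω A₁ A₂ B h u / ∫ x in Ω, ‖u x‖ ^ 2 }

/-- The lowest Dirichlet eigenvalue of the Laplacian on `Ω`. -/
def lambdaD (Ω : Set E2) : ℝ :=
  sInf { r | ∃ v : E2 → ℂ, IsCptSmoothIn Ω v ∧ v ≠ 0 ∧
    r = (∫ x in Ω, (‖pdC 0 v x‖ ^ 2 + ‖pdC 1 v x‖ ^ 2)) / ∫ x in Ω, ‖v x‖ ^ 2 }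

/-! ### Functions supported in a compact subset of `Ω` -/

lemma integrable_of_zero_off {Ω K : Set E2} (hK : IsCompact K) (hKΩ : K ⊆ Ω) {f : E2 → ℝ}
    (hf : ContinuousOn f Ω) (h0 : ∀ x ∉ K, f x = 0) : Integrable f := by
  rw [← integrableOn_iff_integrable_of_support_subset (s := K)
    (fun x hx => by by_contra hn; exact hx (h0 x hn))]
  exact (hf.mono hKΩ).integrableOn_compact hK

/-- A function that is `C^n` only on `Ω` is globally `C^n` once it vanishes off a compact subset
of `Ω`. -/
lemma contDiff_of_zero_off {F : Type*} [NormedAddCommGroup F] [NormedSpace ℝ F]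
    {n : WithTop ℕ∞} {Ω K : Set E2} (hΩ : IsOpen Ω) (hK : IsCompact K)
    (hKΩ : K ⊆ Ω) {f : E2 → F} (hf : ContDiffOn ℝ n f Ω) (h0 : ∀ x ∉ K, f x = 0) :
    ContDiff ℝ n f := by
  rw [contDiff_iff_contDiffAt]
  intro x
  by_cases hx : x ∈ Ω
  · exact hf.contDiffAt (hΩ.mem_nhds hx)
  · have hxK : x ∈ Kᶜ := fun h => hx (hKΩ h)
    have : f =ᶠ[𝓝 x] fun _ => 0 := by
      filter_upwards [hK.isClosed.isOpen_compl.mem_nhds hxK] with y hy using h0 y hy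
    exact contDiffAt_const.congr_of_eventuallyEq this

lemma pdR_zero_off {K : Set E2} (hK : IsCompact K) {f : E2 → ℝ} (h0 : ∀ x ∉ K, f x = 0)
    (i : Fin 2) (x : E2) (hx : x ∉ K) : pdR i f x = 0 := by
  have : f =ᶠ[𝓝 x] fun _ => 0 := by
    filter_upwards [hK.isClosed.isOpen_compl.mem_nhds hx] with y hy using h0 y hy
  simp [pdR, this.fderiv_eq]

lemma pdC_zero_off {K : Set E2} (hK : IsCompact K) {f : E2 → ℂ} (h0 : ∀ x ∉ K, f x = 0)
    (i : Fin 2) (x : E2) (hx : x ∉ K) : pdC i f x = 0 := by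
  have : f =ᶠ[𝓝 x] fun _ => 0 := by
    filter_upwards [hK.isClosed.isOpen_compl.mem_nhds hx] with y hy using h0 y hy
  simp [pdC, this.fderiv_eq]

lemma continuousOn_pdR {Ω : Set E2} (hΩ : IsOpen Ω) {f : E2 → ℝ} (hf : ContDiffOn ℝ 1 f Ω)
    (i : Fin 2) : ContinuousOn (pdR i f) Ω :=
  (hf.continuousOn_fderiv_of_isOpen hΩ le_rfl).clm_apply continuousOn_const

lemma integrable_pdR {Ω K : Set E2} (hΩ : IsOpen Ω) (hK : IsCompact K)
    (hKΩ : K ⊆ Ω) {f : E2 → ℝ} (hf : ContDiffOn ℝ 1 f Ω) (h0 : ∀ x ∉ K, f x = 0) (i : Fin 2) :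
    Integrable (pdR i f) :=
  integrable_of_zero_off hK hKΩ (continuousOn_pdR hΩ hf i) (pdR_zero_off hK h0 i)

lemma setIntegral_pdR_eq_zero {Ω K : Set E2} (hΩ : IsOpen Ω) (hK : IsCompact K)
    (hKΩ : K ⊆ Ω) {f : E2 → ℝ} (hf : ContDiffOn ℝ 1 f Ω) (h0 : ∀ x ∉ K, f x = 0) (i : Fin 2) :
    ∫ x in Ω, pdR i f x = 0 := by
  rw [setIntegral_eq_integral_of_forall_compl_eq_zero
    (fun x hx => pdR_zero_off hK h0 i x (fun h => hx (hKΩ h)))]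
  have hc := contDiff_of_zero_off hΩ hK hKΩ hf h0
  -- integration by parts against the constant function `1`
  have := integral_mul_fderiv_eq_neg_fderiv_mul_of_integrable (μ := (volume : Measure E2))
    (f := fun _ : E2 => (1 : ℝ)) (g := f) (v := EuclideanSpace.single i 1)
    (by simp) (by simp only [one_mul]; exact integrable_pdR hΩ hK hKΩ hf h0 i)
    (by simpa using integrable_of_zero_off hK hKΩ hf.continuousOn h0)
    (fun x _ => by fun_prop) (fun x _ => (hc.differentiable one_ne_zero) x)
  simpa [pdR] using this

/-! ### Calculus of partial derivatives -/

lemma two_le_smooth : (2 : WithTop ℕ∞) ≤ ((⊤ : ℕ∞) : WithTop ℕ∞) := by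
  exact WithTop.coe_le_coe.mpr (le_top : (2 : ℕ∞) ≤ ⊤)

lemma pdR_mul {f g : E2 → ℝ} {x : E2} (hf : DifferentiableAt ℝ f x)
    (hg : DifferentiableAt ℝ g x) (i : Fin 2) :
    pdR i (fun y => f y * g y) x = f x * pdR i g x + g x * pdR i f x := by
  simp [pdR, fderiv_fun_mul hf hg]

lemma pdR_add {f g : E2 → ℝ} {x : E2} (hf : DifferentiableAt ℝ f x)
    (hg : DifferentiableAt ℝ g x) (i : Fin 2) :
    pdR i (fun y => f y + g y) x = pdR i f x + pdR i g x := by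
  simp [pdR, fderiv_fun_add hf hg]

lemma pdR_const_mul {f : E2 → ℝ} {x : E2} (c : ℝ) (hf : DifferentiableAt ℝ f x) (i : Fin 2) :
    pdR i (fun y => c * f y) x = c * pdR i f x := by
  simp [pdR, fderiv_const_mul hf]

lemma contDiff_pdR {f : E2 → ℝ} {n m : WithTop ℕ∞} (hf : ContDiff ℝ n f) (hm : m + 1 ≤ n)
    (i : Fin 2) : ContDiff ℝ m (pdR i f) :=
  (hf.fderiv_right hm).clm_apply contDiff_const

lemma pdR_comm {f : E2 → ℝ} (hf : ContDiff ℝ 2 f) (x : E2) :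
    pdR 0 (pdR 1 f) x = pdR 1 (pdR 0 f) x := by
  have hd : DifferentiableAt ℝ (fderiv ℝ f) x :=
    (hf.fderiv_right (m := 1) (by norm_num)).differentiable one_ne_zero x
  have key : ∀ i j : Fin 2, pdR i (pdR j f) x =
      fderiv ℝ (fderiv ℝ f) x (EuclideanSpace.single i 1) (EuclideanSpace.single j 1) := by
    intro i j
    change fderiv ℝ (fun y => fderiv ℝ f y (EuclideanSpace.single j 1)) x _ = _
    rw [fderiv_clm_apply hd (differentiableAt_const _)]
    simp
  rw [key, key]
  exact (hf.contDiffAt.isSymmSndFDerivAt (by simp)) _ _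

lemma pdC_eq {u : E2 → ℂ} {x : E2} (hu : DifferentiableAt ℝ u x) (i : Fin 2) :
    pdC i u x = (pdR i (fun y => (u y).re) x : ℂ)
      + Complex.I * (pdR i (fun y => (u y).im) x : ℂ) := by
  have h1 : HasFDerivAt (fun y => (u y).re) (Complex.reCLM.comp (fderiv ℝ u x)) x :=
    Complex.reCLM.hasFDerivAt.comp x hu.hasFDerivAt
  have h2 : HasFDerivAt (fun y => (u y).im) (Complex.imCLM.comp (fderiv ℝ u x)) x :=
    Complex.imCLM.hasFDerivAt.comp x hu.hasFDerivAt
  apply Complex.ext <;> simp [pdR, pdC, h1.fderiv, h2.fderiv]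

lemma continuous_pdC {u : E2 → ℂ} (hu : ContDiff ℝ (⊤ : ℕ∞) u) (i : Fin 2) :
    Continuous (pdC i u) :=
  (hu.continuous_fderiv (by simp)).clm_apply continuous_const

/-! ### Supersymmetric factorisation of the Pauli form -/

/-- The first-order operator `(h∂₁ − iA₁) + i(h∂₂ − iA₂)` applied to `u`. -/
def pauliD (A₁ A₂ : E2 → ℝ) (h : ℝ) (u : E2 → ℂ) (x : E2) : ℂ :=
  ((h : ℂ) * pdC 0 u x - Complex.I * (A₁ x : ℂ) * u x)
    + Complex.I * ((h : ℂ) * pdC 1 u x - Complex.I * (A₂ x : ℂ) * u x)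

lemma integrable_pauliD {Ω : Set E2} {A₁ A₂ : E2 → ℝ}
    (hA₁ : ContDiffOn ℝ 1 A₁ Ω) (hA₂ : ContDiffOn ℝ 1 A₂ Ω) (h : ℝ) {u : E2 → ℂ}
    (hu : IsCptSmoothIn Ω u) : Integrable (fun x => ‖pauliD A₁ A₂ h u x‖ ^ 2) := by
  obtain ⟨husm, huc, hus⟩ := hu
  have hu0 : ∀ x ∉ tsupport u, u x = 0 := fun x hx => image_eq_zero_of_notMem_tsupport hx
  have hd := fun i => (continuous_pdC husm i).continuousOn (s := Ω)
  have hu' := husm.continuous.continuousOn (s := Ω)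
  have h1 := Complex.continuous_ofReal.comp_continuousOn hA₁.continuousOn
  have h2 := Complex.continuous_ofReal.comp_continuousOn hA₂.continuousOn
  refine integrable_of_zero_off huc hus ?_ ?_
  · unfold pauliD
    exact (((continuousOn_const.mul (hd 0)).sub ((continuousOn_const.mul h1).mul hu')).add
      (continuousOn_const.mul ((continuousOn_const.mul (hd 1)).sub
        ((continuousOn_const.mul h2).mul hu')))).norm.pow 2
  · intro x hx
    simp [pauliD, hu0 x hx, pdC_zero_off huc hu0 _ x hx]

/-- Expanding the square `|pauliD u|²` yields the integrand of the Pauli form up to the divergence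
of the compactly supported field
`(hA₂|u|² − 2h² a ∂₂b, −hA₁|u|² + 2h² a ∂₁b)`, where `u = a + ib`. -/
lemma pauliQ_eq {Ω : Set E2} (hΩ : IsOpen Ω) {A₁ A₂ B : E2 → ℝ}
    (hA₁ : ContDiffOn ℝ 1 A₁ Ω) (hA₂ : ContDiffOn ℝ 1 A₂ Ω)
    (hB : ∀ x ∈ Ω, B x = pdR 0 A₂ x - pdR 1 A₁ x) (h : ℝ) {u : E2 → ℂ}
    (hu : IsCptSmoothIn Ω u) :
    pauliQ Ω A₁ A₂ B h u = ∫ x in Ω, ‖pauliD A₁ A₂ h u x‖ ^ 2 := by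
  have hint := integrable_pauliD hA₁ hA₂ h hu
  obtain ⟨husm, huc, hus⟩ := hu
  have hu0 : ∀ x ∉ tsupport u, u x = 0 := fun x hx => image_eq_zero_of_notMem_tsupport hx
  have hd := fun i => (continuous_pdC husm i).continuousOn (s := Ω)
  have hu' := husm.continuous.continuousOn (s := Ω)
  have hudiff : Differentiable ℝ u := husm.differentiable (by simp)
  set a : E2 → ℝ := fun y => (u y).re with ha_def
  set b : E2 → ℝ := fun y => (u y).im with hb_def
  have ha : ContDiff ℝ 2 a := (Complex.reCLM.contDiff.comp husm).of_le two_le_smooth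
  have hb : ContDiff ℝ 2 b := (Complex.imCLM.contDiff.comp husm).of_le two_le_smooth
  have ha1 : ContDiff ℝ 1 a := ha.of_le (by norm_num)
  have hb1 : ContDiff ℝ 1 b := hb.of_le (by norm_num)
  have hdb := fun i => contDiff_pdR (m := 1) hb (by norm_num) i
  have ha0 : ∀ x ∉ tsupport u, a x = 0 := fun x hx => by simp [a, hu0 x hx]
  have hb0 : ∀ x ∉ tsupport u, b x = 0 := fun x hx => by simp [b, hu0 x hx]
  set F : E2 → ℝ := fun y => h * (A₂ y * (a y * a y + b y * b y))
    + (-2 * h ^ 2) * (a y * pdR 1 b y) with hF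
  set G : E2 → ℝ := fun y => (-h) * (A₁ y * (a y * a y + b y * b y))
    + (2 * h ^ 2) * (a y * pdR 0 b y) with hG
  have hsq : ContDiff ℝ 1 (fun y => a y * a y + b y * b y) := (ha1.mul ha1).add (hb1.mul hb1)
  have hFc : ContDiffOn ℝ 1 F Ω :=
    (contDiffOn_const.mul (hA₂.mul hsq.contDiffOn)).add
      (contDiffOn_const.mul (ha1.mul (hdb 1)).contDiffOn)
  have hGc : ContDiffOn ℝ 1 G Ω :=
    (contDiffOn_const.mul (hA₁.mul hsq.contDiffOn)).add
      (contDiffOn_const.mul (ha1.mul (hdb 0)).contDiffOn)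
  have hF0 : ∀ x ∉ tsupport u, F x = 0 := fun x hx => by simp [F, ha0 x hx, hb0 x hx]
  have hG0 : ∀ x ∉ tsupport u, G x = 0 := fun x hx => by simp [G, ha0 x hx, hb0 x hx]
  have hFi := integrable_pdR hΩ huc hus hFc hF0 0
  have hGi := integrable_pdR hΩ huc hus hGc hG0 1
  have hBc : ContinuousOn B Ω :=
    ((continuousOn_pdR hΩ hA₂ 0).sub (continuousOn_pdR hΩ hA₁ 1)).congr hB
  have hBi : Integrable (fun x => B x * ‖u x‖ ^ 2) :=
    integrable_of_zero_off huc hus (hBc.mul (hu'.norm.pow 2)) (fun x hx => by simp [hu0 x hx])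
  have hpt : ∀ x ∈ Ω, ‖(h : ℂ) * pdC 0 u x - Complex.I * (A₁ x : ℂ) * u x‖ ^ 2
      + ‖(h : ℂ) * pdC 1 u x - Complex.I * (A₂ x : ℂ) * u x‖ ^ 2
      = ‖pauliD A₁ A₂ h u x‖ ^ 2 + h * (B x * ‖u x‖ ^ 2) - pdR 0 F x - pdR 1 G x := by
    intro x hx
    have dA₁ : DifferentiableAt ℝ A₁ x :=
      (hA₁.contDiffAt (hΩ.mem_nhds hx)).differentiableAt one_ne_zero
    have dA₂ : DifferentiableAt ℝ A₂ x :=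
      (hA₂.contDiffAt (hΩ.mem_nhds hx)).differentiableAt one_ne_zero
    have da : DifferentiableAt ℝ a x := ha1.differentiable one_ne_zero x
    have db : DifferentiableAt ℝ b x := hb1.differentiable one_ne_zero x
    have ddb := fun i => (hdb i).differentiable one_ne_zero x
    have dsq : DifferentiableAt ℝ (fun y => a y * a y + b y * b y) x :=
      (da.fun_mul da).fun_add (db.fun_mul db)
    have hsqd : ∀ i, pdR i (fun y => a y * a y + b y * b y) x
        = 2 * a x * pdR i a x + 2 * b x * pdR i b x := by
      intro i
      rw [pdR_add (da.fun_mul da) (db.fun_mul db), pdR_mul da da, pdR_mul db db]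
      ring
    have e1 : pdR 0 F x = h * (A₂ x * (2 * a x * pdR 0 a x + 2 * b x * pdR 0 b x)
        + (a x * a x + b x * b x) * pdR 0 A₂ x)
        + (-2 * h ^ 2) * (a x * pdR 0 (pdR 1 b) x + pdR 1 b x * pdR 0 a x) := by
      rw [hF, pdR_add ((dA₂.fun_mul dsq).const_mul h) ((da.fun_mul (ddb 1)).const_mul _),
        pdR_const_mul _ (dA₂.fun_mul dsq), pdR_const_mul _ (da.fun_mul (ddb 1)), pdR_mul dA₂ dsq,
        pdR_mul da (ddb 1), hsqd]
    have e2 : pdR 1 G x = (-h) * (A₁ x * (2 * a x * pdR 1 a x + 2 * b x * pdR 1 b x)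
        + (a x * a x + b x * b x) * pdR 1 A₁ x)
        + (2 * h ^ 2) * (a x * pdR 1 (pdR 0 b) x + pdR 0 b x * pdR 1 a x) := by
      rw [hG, pdR_add ((dA₁.fun_mul dsq).const_mul (-h)) ((da.fun_mul (ddb 0)).const_mul _),
        pdR_const_mul _ (dA₁.fun_mul dsq), pdR_const_mul _ (da.fun_mul (ddb 0)), pdR_mul dA₁ dsq,
        pdR_mul da (ddb 0), hsqd]
    rw [e1, e2, hB x hx, pdR_comm hb x, pauliD, pdC_eq (hudiff x) 0, pdC_eq (hudiff x) 1]
    simp only [← Complex.normSq_eq_norm_sq, Complex.normSq_apply]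
    simp only [Complex.add_re, Complex.add_im, Complex.sub_re, Complex.sub_im, Complex.mul_re,
      Complex.mul_im, Complex.ofReal_re, Complex.ofReal_im, Complex.I_re, Complex.I_im]
    simp only [a, b]
    ring
  have hz1 := setIntegral_pdR_eq_zero hΩ huc hus hFc hF0 0
  have hz2 := setIntegral_pdR_eq_zero hΩ huc hus hGc hG0 1
  have h2 : Integrable (fun x => ‖pauliD A₁ A₂ h u x‖ ^ 2 + h * (B x * ‖u x‖ ^ 2)) :=
    hint.add (hBi.const_mul h)
  have h3 : Integrable (fun x => ‖pauliD A₁ A₂ h u x‖ ^ 2 + h * (B x * ‖u x‖ ^ 2) - pdR 0 F x) :=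
    h2.sub hFi
  rw [pauliQ, setIntegral_congr_fun hΩ.measurableSet hpt,
    integral_sub h3.integrableOn hGi.integrableOn, integral_sub h2.integrableOn hFi.integrableOn,
    integral_add hint.integrableOn (hBi.const_mul h).integrableOn, hz1, hz2,
    integral_const_mul]
  ring

/-- For `A = 0`, `h = 1`: the Dirichlet energy equals `∫ |∂₁v + i∂₂v|²`. -/
lemma dirichlet_eq {Ω : Set E2} (hΩ : IsOpen Ω) {v : E2 → ℂ} (hv : IsCptSmoothIn Ω v) :
    ∫ x in Ω, (‖pdC 0 v x‖ ^ 2 + ‖pdC 1 v x‖ ^ 2)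
      = ∫ x in Ω, ‖pdC 0 v x + Complex.I * pdC 1 v x‖ ^ 2 := by
  have := pauliQ_eq hΩ (A₁ := fun _ => 0) (A₂ := fun _ => 0) (B := fun _ => 0) contDiffOn_const
    contDiffOn_const (fun x _ => by simp [pdR]) 1 hv
  simpa [pauliQ, pauliD] using this

/-! ### The maximum principle -/

lemma pdR_pdR_nonpos_of_isLocalMax {ψ : E2 → ℝ} {x : E2} (hψ : ContDiffAt ℝ 2 ψ x)
    (hm : IsLocalMax ψ x) (i : Fin 2) : pdR i (pdR i ψ) x ≤ 0 := by
  set e : E2 := EuclideanSpace.single i 1 with he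
  set γ : ℝ → E2 := fun t => x + t • e with hγ
  have hγd : ∀ t, HasDerivAt γ e t := fun t => by
    simpa [γ] using (hasDerivAt_id' t).smul_const e
  have hγ0 : γ 0 = x := by simp [γ]
  have hγt : Tendsto γ (𝓝 0) (𝓝 x) := by
    have := (hγd 0).continuousAt.tendsto
    rwa [hγ0] at this
  have hev : ∀ᶠ y in 𝓝 x, DifferentiableAt ℝ ψ y := by
    filter_upwards [hψ.eventually (by simp)] with y hy using hy.differentiableAt (by norm_num)
  have hd1 : deriv (ψ ∘ γ) =ᶠ[𝓝 0] fun t => pdR i ψ (γ t) := by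
    filter_upwards [hγt.eventually hev] with t ht
    exact (ht.hasFDerivAt.comp_hasDerivAt t (hγd t)).deriv
  have hpd : DifferentiableAt ℝ (pdR i ψ) x :=
    ((hψ.fderiv_right (m := 1) (by norm_num)).differentiableAt one_ne_zero).clm_apply
      (differentiableAt_const _)
  have hd2 : deriv (deriv (ψ ∘ γ)) 0 = pdR i (pdR i ψ) x := by
    rw [hd1.deriv_eq]
    have hpd' : DifferentiableAt ℝ (pdR i ψ) (γ 0) := by rwa [hγ0]
    have := (hpd'.hasFDerivAt.comp_hasDerivAt 0 (hγd 0)).deriv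
    rw [hγ0] at this
    exact this
  have hmax : IsLocalMax (ψ ∘ γ) 0 := by
    have := hγt.eventually hm
    filter_upwards [this] with t ht
    simpa [hγ0] using ht
  by_contra! hpos
  have hc : ContinuousAt (ψ ∘ γ) 0 := by
    have : ContinuousAt ψ (γ 0) := by rw [hγ0]; exact hψ.continuousAt
    exact this.comp (hγd 0).continuousAt
  have hmin : IsLocalMin (ψ ∘ γ) 0 :=
    isLocalMin_of_deriv_deriv_pos (by rwa [hd2]) hmax.deriv_eq_zero hc
  -- a simultaneous local maximum and minimum: `ψ ∘ γ` is locally constant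
  have hconst : (ψ ∘ γ) =ᶠ[𝓝 0] fun _ => (ψ ∘ γ) 0 := by
    filter_upwards [hmax, hmin] with t h1 h2 using le_antisymm h1 h2
  have : deriv (deriv (ψ ∘ γ)) 0 = 0 := by
    rw [hconst.deriv.deriv_eq]; simp
  linarith

lemma psi_nonpos {Ω : Set E2} (hΩo : IsOpen Ω) (hΩb : Bornology.IsBounded Ω) {B ψ : E2 → ℝ}
    (hBpos : ∀ x ∈ Ω, 0 < B x) (hψc : ContinuousOn ψ (closure Ω))
    (hψsm : ContDiffOn ℝ (⊤ : ℕ∞) ψ Ω) (hΔ : ∀ x ∈ Ω, lapl ψ x = B x)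
    (hbd : ∀ x ∈ frontier Ω, ψ x = 0) : ∀ x ∈ Ω, ψ x ≤ 0 := by
  intro x hx
  obtain ⟨z, hz, hzm⟩ := hΩb.isCompact_closure.exists_isMaxOn ⟨x, subset_closure hx⟩ hψc
  have hxz : ψ x ≤ ψ z := hzm (subset_closure hx)
  by_cases hzΩ : z ∈ Ω
  · have hloc : IsLocalMax ψ z :=
      (hzm.on_subset subset_closure).isLocalMax (hΩo.mem_nhds hzΩ)
    have hsm : ContDiffAt ℝ 2 ψ z :=
      (hψsm.contDiffAt (hΩo.mem_nhds hzΩ)).of_le two_le_smooth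
    have h0 := pdR_pdR_nonpos_of_isLocalMax hsm hloc 0
    have h1 := pdR_pdR_nonpos_of_isLocalMax hsm hloc 1
    have h2 := hΔ z hzΩ
    have h3 := hBpos z hzΩ
    rw [lapl] at h2
    linarith
  · rw [hbd z ⟨hz, by rwa [hΩo.interior_eq]⟩] at hxz
    exact hxz

/-! ### Comparison of the two Rayleigh quotients -/

lemma norm_sq_integral_pos {Ω : Set E2} {u : E2 → ℂ} (hu : IsCptSmoothIn Ω u) (hne : u ≠ 0) :
    0 < ∫ x in Ω, ‖u x‖ ^ 2 := by
  obtain ⟨husm, huc, hus⟩ := hu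
  have hu0 : ∀ x ∉ tsupport u, u x = 0 := fun x hx => image_eq_zero_of_notMem_tsupport hx
  rw [setIntegral_eq_integral_of_forall_compl_eq_zero
    (fun x hx => by simp [hu0 x (fun h => hx (hus h))])]
  obtain ⟨x, hx⟩ := Function.ne_iff.mp hne
  exact (husm.continuous.norm.pow 2).integral_pos_of_hasCompactSupport_nonneg_nonzero (x := x)
    (HasCompactSupport.intro huc (fun x hx => by simp [hu0 x hx]))
    (fun x => by positivity) (by simpa using hx)

lemma lambdaD_mul_le {Ω : Set E2} {v : E2 → ℂ} (hv : IsCptSmoothIn Ω v) (hne : v ≠ 0) :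
    lambdaD Ω * ∫ x in Ω, ‖v x‖ ^ 2 ≤ ∫ x in Ω, (‖pdC 0 v x‖ ^ 2 + ‖pdC 1 v x‖ ^ 2) := by
  rw [← le_div_iff₀ (norm_sq_integral_pos hv hne)]
  refine csInf_le ⟨0, ?_⟩ ⟨v, hv, hne, rfl⟩
  rintro r ⟨w, -, -, rfl⟩
  positivity

lemma lambdaD_nonneg (Ω : Set E2) : 0 ≤ lambdaD Ω := by
  refine Real.sInf_nonneg ?_
  rintro r ⟨w, -, -, rfl⟩
  positivity

lemma exists_isCptSmoothIn {Ω : Set E2} (hΩo : IsOpen Ω) (hΩne : Ω.Nonempty) :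
    ∃ u : E2 → ℂ, IsCptSmoothIn Ω u ∧ u ≠ 0 := by
  obtain ⟨x, hx⟩ := hΩne
  obtain ⟨f, h1, h2, h3, -, h5⟩ := exists_contDiff_tsupport_subset (n := ⊤) (hΩo.mem_nhds hx)
  refine ⟨Complex.ofRealCLM ∘ f, ⟨Complex.ofRealCLM.contDiff.comp h3, h2.comp_left rfl,
    (tsupport_comp_subset rfl _).trans h1⟩, fun h0 => ?_⟩
  have := congrFun h0 x
  simp [h5] at this

/-- The gauge factor `e^{ψ/h}` intertwines `pauliD` with `h(∂₁ + i∂₂)`. -/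
lemma gauge_identity {ψ : E2 → ℝ} {u : E2 → ℂ} {h : ℝ} (hh : 0 < h) {x : E2}
    (hψ : DifferentiableAt ℝ ψ x) (hu : DifferentiableAt ℝ u x) :
    (h : ℂ) * (pdC 0 (fun y => ((Real.exp (ψ y / h) : ℝ) : ℂ) * u y) x
      + Complex.I * pdC 1 (fun y => ((Real.exp (ψ y / h) : ℝ) : ℂ) * u y) x)
    = (Real.exp (ψ x / h) : ℂ)
      * pauliD (fun y => -pdR 1 ψ y) (fun y => pdR 0 ψ y) h u x := by
  have he : HasFDerivAt (fun y => Real.exp (ψ y / h))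
      (Real.exp (ψ x / h) • (h⁻¹ • fderiv ℝ ψ x)) x := by
    have := (hψ.hasFDerivAt.const_mul h⁻¹).exp
    simpa [div_eq_inv_mul] using this
  have hc : HasFDerivAt (fun y => ((Real.exp (ψ y / h) : ℝ) : ℂ))
      (Complex.ofRealCLM.comp (Real.exp (ψ x / h) • (h⁻¹ • fderiv ℝ ψ x))) x :=
    Complex.ofRealCLM.hasFDerivAt.comp x he
  have hp : ∀ i, pdC i (fun y => ((Real.exp (ψ y / h) : ℝ) : ℂ) * u y) x
      = (Real.exp (ψ x / h) : ℂ) * (pdC i u x + (h : ℂ)⁻¹ * (pdR i ψ x : ℂ) * u x) := by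
    intro i
    rw [pdC, (hc.fun_mul hu.hasFDerivAt).fderiv]
    simp [pdC, pdR]
    ring
  have hh' : (h : ℂ) ≠ 0 := by exact_mod_cast hh.ne'
  rw [hp, hp, pauliD]
  push_cast
  field_simp
  ring_nf
  simp only [Complex.I_sq]
  ring

/-- if `B > 0` on `Ω`, `Δψ = B` in `Ω`, `ψ = 0` on `∂Ω`, and
`A = (−∂₂ψ, ∂₁ψ)`, then `λ_{P₋}(h) ≥ h² λ^D(Ω) exp(2ψ_min/h)` for all `h > 0`. -/
theorem stmt2 (Ω : Set E2) (hΩo : IsOpen Ω) (hΩne : Ω.Nonempty)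
    (hΩb : Bornology.IsBounded Ω)
    (B ψ : E2 → ℝ)
    (hBsm : ContDiffOn ℝ (⊤ : ℕ∞) B Ω) (hBpos : ∀ x ∈ Ω, 0 < B x)
    (hψc : ContinuousOn ψ (closure Ω))
    (hψsm : ContDiffOn ℝ (⊤ : ℕ∞) ψ Ω)
    (hΔ : ∀ x ∈ Ω, lapl ψ x = B x)
    (hbd : ∀ x ∈ frontier Ω, ψ x = 0) :
    ∀ h : ℝ, 0 < h →
      lambdaP Ω (fun x => -pdR 1 ψ x) (fun x => pdR 0 ψ x) B h
        ≥ h ^ 2 * lambdaD Ω * Real.exp (2 * sInf (ψ '' Ω) / h) := by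
  intro h hh
  have hψ0 := psi_nonpos hΩo hΩb hBpos hψc hψsm hΔ hbd
  have hbdd : BddBelow (ψ '' Ω) :=
    (hΩb.isCompact_closure.bddBelow_image hψc).mono (Set.image_mono subset_closure)
  set m := sInf (ψ '' Ω) with hm
  have hpd : ∀ i, ContDiffOn ℝ 1 (pdR i ψ) Ω := fun i =>
    (hψsm.fderiv_of_isOpen hΩo (m := 1) (le_of_eq_of_le (by norm_num) two_le_smooth)).clm_apply contDiffOn_const
  have hA₁ : ContDiffOn ℝ 1 (fun x => -pdR 1 ψ x) Ω := (hpd 1).neg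
  have hA₂ : ContDiffOn ℝ 1 (fun x => pdR 0 ψ x) Ω := hpd 0
  have hcurl : ∀ x ∈ Ω, B x = pdR 0 (fun x => pdR 0 ψ x) x - pdR 1 (fun x => -pdR 1 ψ x) x := by
    intro x hx
    have : pdR 1 (fun x => -pdR 1 ψ x) x = -pdR 1 (pdR 1 ψ) x := by
      rw [pdR, fderiv_fun_neg]; rfl
    rw [this, sub_neg_eq_add]
    exact (hΔ x hx).symm
  refine le_csInf ?_ ?_
  · obtain ⟨u, hu, hne⟩ := exists_isCptSmoothIn hΩo hΩne
    exact ⟨_, u, hu, hne, rfl⟩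
  rintro r ⟨u, hu, hne, rfl⟩
  rw [le_div_iff₀ (norm_sq_integral_pos hu hne), pauliQ_eq hΩo hA₁ hA₂ hcurl h hu]
  have hint := integrable_pauliD hA₁ hA₂ h hu
  obtain ⟨husm, huc, hus⟩ := id hu
  have hu0 : ∀ x ∉ tsupport u, u x = 0 := fun x hx => image_eq_zero_of_notMem_tsupport hx
  set v : E2 → ℂ := fun y => ((Real.exp (ψ y / h) : ℝ) : ℂ) * u y with hv_def
  have hv0 : ∀ x ∉ tsupport u, v x = 0 := fun x hx => by simp [v, hu0 x hx]
  have hsupp : Function.support v = Function.support u := by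
    ext x; simp [v]
  have hv : IsCptSmoothIn Ω v := by
    refine ⟨contDiff_of_zero_off hΩo huc hus ?_ hv0, HasCompactSupport.intro huc hv0, ?_⟩
    · exact (Complex.ofRealCLM.contDiff.comp_contDiffOn
        (Real.contDiff_exp.comp_contDiffOn (hψsm.div_const h))).mul husm.contDiffOn
    · rw [tsupport, hsupp]; exact hus
  have hvne : v ≠ 0 := by
    rwa [← Function.support_nonempty_iff, hsupp, Function.support_nonempty_iff]
  have key := lambdaD_mul_le hv hvne
  rw [dirichlet_eq hΩo hv] at key
  have hnormv : ∀ x, ‖v x‖ ^ 2 = Real.exp (2 * ψ x / h) * ‖u x‖ ^ 2 := by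
    intro x
    rw [hv_def, norm_mul, Complex.norm_real, Real.norm_eq_abs, abs_of_pos (Real.exp_pos _),
      mul_pow, ← Real.exp_nat_mul]
    congr 2
    push_cast
    ring
  have hint_u : ∀ w : E2 → ℂ, IsCptSmoothIn Ω w → Integrable (fun x => ‖w x‖ ^ 2) :=
    fun w hw => integrable_of_zero_off hw.2.1 hw.2.2 (hw.1.continuous.norm.pow 2).continuousOn
      (fun x hx => by simp [image_eq_zero_of_notMem_tsupport hx])
  have step1 : Real.exp (2 * m / h) * ∫ x in Ω, ‖u x‖ ^ 2 ≤ ∫ x in Ω, ‖v x‖ ^ 2 := by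
    rw [← integral_const_mul]
    refine setIntegral_mono_on ((hint_u u hu).const_mul _).integrableOn
      (hint_u v hv).integrableOn hΩo.measurableSet fun x hx => ?_
    rw [hnormv]
    have : m ≤ ψ x := csInf_le hbdd ⟨x, hx, rfl⟩
    gcongr
  have step2 : h ^ 2 * ∫ x in Ω, ‖pdC 0 v x + Complex.I * pdC 1 v x‖ ^ 2
      ≤ ∫ x in Ω, ‖pauliD (fun x => -pdR 1 ψ x) (fun x => pdR 0 ψ x) h u x‖ ^ 2 := by
    rw [← integral_const_mul]
    refine setIntegral_mono_on ?_ hint.integrableOn hΩo.measurableSet fun x hx => ?_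
    · have := integrable_pauliD (Ω := Ω) (A₁ := fun _ => 0) (A₂ := fun _ => 0)
        contDiffOn_const contDiffOn_const 1 hv
      simpa [pauliD] using (this.const_mul (h ^ 2)).integrableOn (s := Ω)
    · have hψd : DifferentiableAt ℝ ψ x :=
        (hψsm.contDiffAt (hΩo.mem_nhds hx)).differentiableAt (by simp)
      have hg := congrArg (fun z => ‖z‖ ^ 2)
        (gauge_identity hh hψd (husm.differentiable (by simp) x))
      simp only [norm_mul, mul_pow, Complex.norm_real, Real.norm_eq_abs, sq_abs] at hg
      rw [hg]
      have he : Real.exp (ψ x / h) ≤ 1 :=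
        Real.exp_le_one_iff.mpr (div_nonpos_of_nonpos_of_nonneg (hψ0 x hx) hh.le)
      exact mul_le_of_le_one_left (by positivity) (pow_le_one₀ (Real.exp_pos _).le he)
  calc h ^ 2 * lambdaD Ω * Real.exp (2 * m / h) * ∫ x in Ω, ‖u x‖ ^ 2
      = h ^ 2 * (lambdaD Ω * (Real.exp (2 * m / h) * ∫ x in Ω, ‖u x‖ ^ 2)) := by ring
    _ ≤ h ^ 2 * (lambdaD Ω * ∫ x in Ω, ‖v x‖ ^ 2) := by
        have := lambdaD_nonneg Ω
        gcongr
    _ ≤ h ^ 2 * ∫ x in Ω, ‖pdC 0 v x + Complex.I * pdC 1 v x‖ ^ 2 := by gcongr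
    _ ≤ _ := step2
end
end

section
/- Let Ω ⊂ ℝ² be a nonempty bounded open simply connected set with smooth boundary, B smooth on a neighborhood of the closure of Ω with B(x) > 0 there, ψ smooth on a neighborhood of the closure of Ω with Δψ = B in Ω and ψ = 0 on ∂Ω, and A = (−∂₂ψ, ∂₁ψ) the canonical vector potential. Set ψ_min := inf_Ω ψ and Φ := (1/(2π))∫_Ω B(x) dx. Assume the set {x ∈ Ω : ψ(x) = ψ_min} consists of finitely many points x₁, …, x_N, at each of which the Hessian matrix Hess ψ(x_j) is positive definite. Then limsup_{h→0⁺} exp(−2ψ_min/h) · λ_{P₋}(h) ≤ 4Φ · ( Σ_{j=1}^N (det Hess ψ(x_j))^{−1/2} )^{−1}. -/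
/-!
The upper bound comes from a trial function. For real `u = g ∘ ψ`, with `g` vanishing near
`[0, ∞)`, Green's identity `∫ Δψ G(ψ) = -∫ G'(ψ) |∇ψ|²` (`DomainData.green`) with `G = g²` turns
the Pauli energy into `∫ (h g' + g)²(ψ) |∇ψ|²` (`DomainData.pauliQ_cut`). The ideal choice
`u = e^{-ψ/h} - e^{ψ/h} = e^{-ψ/h} w` with `w = 1 - e^{2ψ/h}` vanishes on the boundary but is not
compactly supported, so `w` is replaced by `χ(w)`, where `χ` is smooth, vanishes near `(-∞, 0]`,
`0 ≤ χ' ≤ 1`, and `χ(1) ≥ 1 - η` (`exists_cutoff`). Since `e^{-2s/h} (dw/ds)² ds = (2/h) |dw|`,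
a second application of Green's identity gives exactly `Q_h(u) = 2h ∫ B P(w)` with
`P' = χ'²`, hence `0 ≤ Q_h(u) ≤ 2h ∫ B` (`DomainData.pauliQ_trial`). The cutoff `χ` does not
depend on `h`.

For the norm only a lower bound is needed. Restricting `∫ |u|²` to the balls of radius `R √h`
around the minima and rescaling, dominated convergence and the second-order Taylor expansion give
`h⁻¹ e^{2ψ_min/h} ∫ |u|² ≥ χ(1)² Σ_j ∫_{|y| < R} e^{-⟨y, Hess ψ(x_j) y⟩} dy + o(1)`
(`DomainData.tendsto_laplace`); this uses `ψ_min < 0`, which is the maximum principle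
(`DomainData.neg_of_mem`). As `R → ∞` and `η → 0` the right side tends to
`π Σ_j (det Hess ψ(x_j))^{-1/2}` (`integral_exp_neg_qform`), and the quotient of the two bounds
is the claimed constant (`eventually_lambdaP_le`).
-/

open MeasureTheory Filter Topology

noncomputable section

/-- The Hessian matrix of second partial derivatives of `ψ` at `x`. -/
def hess (ψ : E2 → ℝ) (x : E2) : Matrix (Fin 2) (Fin 2) ℝ :=
  Matrix.of fun i j => pdR i (pdR j ψ) x

/-- `Ω` has smooth boundary: near each boundary point, `Ω` is the sublevel set of a smooth
function with nonvanishing differential. -/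
def HasSmoothBoundary (Ω : Set E2) : Prop :=
  ∀ x ∈ frontier Ω, ∃ (V : Set E2) (f : E2 → ℝ), IsOpen V ∧ x ∈ V ∧
    ContDiffOn ℝ (⊤ : ℕ∞) f V ∧ (∀ y ∈ V, fderiv ℝ f y ≠ 0) ∧
    Ω ∩ V = {y ∈ V | f y < 0}

/-! ### Gaussian integrals -/

/-- The quadratic form `yᵀ M y` of a `2 × 2` matrix, written out. -/
def qform (M : Matrix (Fin 2) (Fin 2) ℝ) (y : E2) : ℝ :=
  M 0 0 * y 0 ^ 2 + (M 0 1 + M 1 0) * (y 0 * y 1) + M 1 1 * y 1 ^ 2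

lemma continuous_qform (M : Matrix (Fin 2) (Fin 2) ℝ) : Continuous (qform M) := by
  unfold qform; fun_prop

/-- The Cholesky factor of `M` turns the integral into the standard Gaussian one. -/
lemma integral_exp_neg_qform {M : Matrix (Fin 2) (Fin 2) ℝ} (hM : M.PosDef) :
    ∫ y : E2, Real.exp (-qform M y) = Real.pi * M.det ^ (-(1:ℝ)/2) := by
  have hsym : M 1 0 = M 0 1 := by simpa using hM.1.apply 0 1
  have ha : 0 < M 0 0 := hM.diag_pos
  have hd : 0 < M.det := hM.det_pos
  set a := M 0 0 with haa
  set b := M 0 1 with hb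
  set c := M 1 1 with hc
  have hdet : M.det = a * c - b * b := by
    rw [Matrix.det_fin_two, hsym]
  set d := M.det with hdd
  let C : Matrix (Fin 2) (Fin 2) ℝ := !![√a, b / √a; 0, √(d / a)]
  let L : E2 →ₗ[ℝ] E2 := Matrix.toLin (EuclideanSpace.basisFun (Fin 2) ℝ).toBasis
    (EuclideanSpace.basisFun (Fin 2) ℝ).toBasis C
  have hLdet : LinearMap.det L = √d := by
    simp only [L, LinearMap.det_toLin, C, Matrix.det_fin_two_of]
    rw [← Real.sqrt_mul ha.le]
    field_simp
    simp
  have hne : LinearMap.det L ≠ 0 := by rw [hLdet]; positivity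
  have hL0 : ∀ y : E2, L y 0 = √a * y 0 + b / √a * y 1 := by
    intro y
    simp [L, C, Matrix.toLin_apply, Matrix.mulVec, dotProduct, Fin.sum_univ_two]
  have hL1 : ∀ y : E2, L y 1 = √(d / a) * y 1 := by
    intro y
    simp [L, C, Matrix.toLin_apply, Matrix.mulVec, dotProduct, Fin.sum_univ_two]
  have hq : ∀ y : E2, qform M y = ‖L y‖ ^ 2 := by
    intro y
    rw [EuclideanSpace.norm_sq_eq, Fin.sum_univ_two, hL0, hL1]
    simp only [Real.norm_eq_abs, sq_abs, qform, hsym, ← haa, ← hb, ← hc]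
    have h1 : √a ^ 2 = a := Real.sq_sqrt ha.le
    have h2 : √(d / a) ^ 2 = d / a := Real.sq_sqrt (by positivity)
    have h3 : √a ≠ 0 := by positivity
    rw [mul_pow, h2]
    have h4 : (√a * y 0 + b / √a * y 1) ^ 2 = a * y 0 ^ 2 + 2 * b * (y 0 * y 1)
        + b ^ 2 / a * y 1 ^ 2 := by
      rw [add_sq, mul_pow, mul_pow, div_pow, h1]
      field_simp
    rw [h4, hdet]
    field_simp
    ring
  have hcont : Continuous fun y : E2 => Real.exp (-‖y‖ ^ 2) := by fun_prop
  have hLc : Continuous L := L.continuous_of_finiteDimensional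
  have key := Measure.map_linearMap_addHaar_eq_smul_addHaar (volume : Measure E2) hne
  have h5 := integral_map (μ := (volume : Measure E2)) (φ := L) hLc.measurable.aemeasurable
    (f := fun y : E2 => Real.exp (-‖y‖ ^ 2)) hcont.aestronglyMeasurable
  rw [key, integral_smul_measure] at h5
  have h6 := GaussianFourier.integral_rexp_neg_mul_sq_norm (V := E2) (b := 1) one_pos
  simp only [hq]
  rw [← h5]
  simp only [neg_mul, one_mul, div_one] at h6
  rw [h6, hLdet, ENNReal.toReal_ofReal (abs_nonneg _), abs_of_nonneg (by positivity)]
  simp only [finrank_euclideanSpace, Fintype.card_fin, smul_eq_mul]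
  have h7 : d ^ (-(1:ℝ)/2) = (√d)⁻¹ := by
    rw [Real.sqrt_eq_rpow, ← Real.rpow_neg hd.le]; norm_num
  rw [h7]
  norm_num
  ring

lemma integrable_exp_neg_qform {M : Matrix (Fin 2) (Fin 2) ℝ} (hM : M.PosDef) :
    Integrable (fun y : E2 => Real.exp (-qform M y)) := by
  by_contra hcon
  have h := integral_exp_neg_qform hM
  rw [integral_undef hcon] at h
  have := hM.det_pos
  have : 0 < Real.pi * M.det ^ (-(1:ℝ)/2) := by positivity
  linarith

/-! ### Cutoff functions -/

/-- A smooth function with derivative `θ` that inherits the vanishing of `θ` on `(-∞, δ]`. -/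
lemma exists_primitive {θ : ℝ → ℝ} (hθ : ContDiff ℝ (⊤ : ℕ∞) θ) {δ : ℝ}
    (h0 : ∀ t ≤ δ, θ t = 0) :
    ∃ P : ℝ → ℝ, ContDiff ℝ (⊤ : ℕ∞) P ∧ (∀ t, HasDerivAt P (θ t) t) ∧ ∀ t ≤ δ, P t = 0 := by
  have hd : ∀ t, HasDerivAt (fun t => ∫ s in δ..t, θ s) (θ t) t := fun t =>
    (hθ.continuous.integral_hasStrictDerivAt δ t).hasDerivAt
  refine ⟨fun t => ∫ s in δ..t, θ s, ?_, hd, ?_⟩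
  · rw [contDiff_infty_iff_deriv]
    exact ⟨fun t => (hd t).differentiableAt, by rwa [funext fun t => (hd t).deriv]⟩
  · intro t ht
    change ∫ s in δ..t, θ s = 0
    rw [intervalIntegral.integral_congr (g := fun _ => (0:ℝ))]
    · simp
    · intro s hs
      rw [Set.uIcc_of_ge ht] at hs
      exact h0 s hs.2

/-- Smooth cutoffs `χ` vanishing near `(-∞, 0]` with Dirichlet energy at most that of the
identity on `[0, 1]` and `χ 1` almost `1`. The function `P` is the energy `∫ χ'²`. -/
lemma exists_cutoff {η : ℝ} (hη : 0 < η) (hη1 : η < 1) :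
    ∃ (χ θ P : ℝ → ℝ) (δ : ℝ), 0 < δ ∧ δ < 1 ∧ ContDiff ℝ (⊤ : ℕ∞) χ ∧
      ContDiff ℝ (⊤ : ℕ∞) P ∧
      (∀ t, HasDerivAt χ (θ t) t) ∧ (∀ t, HasDerivAt P (θ t ^ 2) t) ∧
      (∀ t ≤ δ, χ t = 0) ∧ (∀ t ≤ δ, P t = 0) ∧
      (∀ t, 0 ≤ χ t) ∧ (∀ t, 0 ≤ P t) ∧ (∀ t ≤ 1, χ t ≤ 1) ∧ (∀ t ≤ 1, P t ≤ 1) ∧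
      1 - η ≤ χ 1 := by
  set δ := η / 2 with hδ
  have hδ0 : 0 < δ := by positivity
  let θ : ℝ → ℝ := fun t => Real.smoothTransition (t / δ - 1)
  have hθs : ContDiff ℝ (⊤ : ℕ∞) θ :=
    Real.smoothTransition.contDiff.comp ((contDiff_id.div_const δ).sub contDiff_const)
  have hθ0 : ∀ t ≤ δ, θ t = 0 := fun t ht =>
    Real.smoothTransition.zero_of_nonpos (by rw [sub_nonpos, div_le_one hδ0]; exact ht)
  have hθ1 : ∀ t, 2 * δ ≤ t → θ t = 1 := fun t ht =>
    Real.smoothTransition.one_of_one_le (by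
      rw [le_sub_iff_add_le, le_div_iff₀ hδ0]; linarith)
  have hθn : ∀ t, 0 ≤ θ t := fun t => Real.smoothTransition.nonneg _
  have hθl : ∀ t, θ t ≤ 1 := fun t => Real.smoothTransition.le_one _
  obtain ⟨χ, hχs, hχd, hχ0⟩ := exists_primitive hθs hθ0
  obtain ⟨P, hPs, hPd, hP0⟩ := exists_primitive (θ := fun t => θ t ^ 2) (hθs.pow 2) (δ := δ)
    (fun t ht => by simp [hθ0 t ht])
  have mono : ∀ (f g : ℝ → ℝ), (∀ t, HasDerivAt f (g t) t) → (∀ t, 0 ≤ g t) → Monotone f :=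
    fun f g hf hg => monotone_of_deriv_nonneg (fun t => (hf t).differentiableAt)
      (fun t => by rw [(hf t).deriv]; exact hg t)
  have hχm := mono χ θ hχd hθn
  have hPm := mono P _ hPd (fun t => sq_nonneg _)
  have hχm' := mono (fun t => t - χ t) (fun t => 1 - θ t)
    (fun t => (hasDerivAt_id t).sub (hχd t)) (fun t => by linarith [hθl t])
  have hPm' := mono (fun t => t - P t) (fun t => 1 - θ t ^ 2)
    (fun t => (hasDerivAt_id t).sub (hPd t))
    (fun t => by nlinarith [hθl t, hθn t])
  have nn : ∀ f : ℝ → ℝ, Monotone f → (∀ t ≤ δ, f t = 0) → ∀ t, 0 ≤ f t := by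
    intro f hf h0 t
    rcases le_total t δ with h | h
    · rw [h0 t h]
    · rw [← h0 δ le_rfl]; exact hf h
  have le1 : ∀ f : ℝ → ℝ, Monotone (fun t => t - f t) → (∀ t ≤ δ, f t = 0) →
      ∀ t ≤ 1, f t ≤ 1 := by
    intro f hf h0 t ht
    rcases le_total t δ with h | h
    · rw [h0 t h]; exact zero_le_one
    · have := hf h
      simp only [h0 δ le_rfl] at this
      linarith
  refine ⟨χ, θ, P, δ, hδ0, by linarith, hχs, hPs, hχd, hPd, hχ0, hP0, nn χ hχm hχ0, nn P hPm hP0,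
    le1 χ hχm' hχ0, le1 P hPm' hP0, ?_⟩
  -- On `[2δ, 1]` the function `t - χ t` is constant.
  have hc : ∀ x ∈ Set.Icc (2 * δ) 1, (fun t => t - χ t) x = (fun t => t - χ t) (2 * δ) := by
    apply constant_of_has_deriv_right_zero
    · exact (continuous_id.sub hχs.continuous).continuousOn
    · intro t ht
      have := ((hasDerivAt_id t).sub (hχd t)).hasDerivWithinAt (s := Set.Ici t)
      rw [hθ1 t ht.1, sub_self] at this
      exact this
  have h1 := hc 1 ⟨by linarith, le_rfl⟩
  have h2 := nn χ hχm hχ0 (2 * δ)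
  simp only at h1
  linarith

/-! ### Functions of the potential and Green's identity -/

/-- The geometric hypotheses on the domain `Ω` and the potential `ψ` used by the trial functions. -/
structure DomainData (Ω U : Set E2) (ψ : E2 → ℝ) : Prop where
  isOpen : IsOpen Ω
  bounded : Bornology.IsBounded Ω
  isOpen_nhd : IsOpen U
  closure_subset : closure Ω ⊆ U
  smooth : ContDiffOn ℝ (⊤ : ℕ∞) ψ U
  bdry : ∀ x ∈ frontier Ω, ψ x = 0

/-- The function `g ∘ ψ` on `Ω`, extended by zero. -/
def cut (Ω : Set E2) (ψ : E2 → ℝ) (g : ℝ → ℝ) : E2 → ℝ :=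
  Ω.indicator fun x => g (ψ x)

lemma cut_of_mem {Ω : Set E2} {ψ : E2 → ℝ} {g : ℝ → ℝ} {x : E2} (hx : x ∈ Ω) :
    cut Ω ψ g x = g (ψ x) := Set.indicator_of_mem hx _

lemma contDiffOn_pdR {U : Set E2} (hU : IsOpen U) {f : E2 → ℝ}
    (hf : ContDiffOn ℝ (⊤ : ℕ∞) f U) (i : Fin 2) : ContDiffOn ℝ (⊤ : ℕ∞) (pdR i f) U :=
  (hf.fderiv_of_isOpen hU (by simp)).clm_apply contDiffOn_const

namespace DomainData

variable {Ω U : Set E2} {ψ : E2 → ℝ}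

lemma subset (D : DomainData Ω U ψ) : Ω ⊆ U := subset_closure.trans D.closure_subset

lemma integrableOn (D : DomainData Ω U ψ) {f : E2 → ℝ} (hf : ContinuousOn f U) :
    IntegrableOn f Ω :=
  ((hf.mono D.closure_subset).integrableOn_compact D.bounded.isCompact_closure).mono_set
    subset_closure

/-- If `g` vanishes near `[0, ∞)`, then `g ∘ ψ` is supported in a compact subset of `Ω`, because
`ψ` vanishes on the boundary. -/
lemma tsupport_cut (D : DomainData Ω U ψ) {g : ℝ → ℝ} {ε : ℝ} (hε : 0 < ε)
    (hg : ∀ s, -ε ≤ s → g s = 0) :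
    HasCompactSupport (cut Ω ψ g) ∧ tsupport (cut Ω ψ g) ⊆ Ω := by
  have hcont : ContinuousOn ψ (closure Ω) := D.smooth.continuousOn.mono D.closure_subset
  let K : Set E2 := closure Ω ∩ ψ ⁻¹' Set.Iic (-ε)
  have hKc : IsClosed K := hcont.preimage_isClosed_of_isClosed isClosed_closure isClosed_Iic
  have hKk : IsCompact K := D.bounded.isCompact_closure.of_isClosed_subset hKc
    Set.inter_subset_left
  have hKΩ : K ⊆ Ω := by
    rintro x ⟨hx, hxe⟩
    by_contra hxn
    have : x ∈ frontier Ω := by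
      rw [D.isOpen.frontier_eq]; exact ⟨hx, hxn⟩
    have h0 := D.bdry x this
    simp only [Set.mem_preimage, Set.mem_Iic] at hxe
    linarith
  have hsub : Function.support (cut Ω ψ g) ⊆ K := by
    intro x hx
    have hxΩ : x ∈ Ω := by
      by_contra hxn
      exact hx (Set.indicator_of_notMem hxn _)
    refine ⟨subset_closure hxΩ, ?_⟩
    by_contra hxn
    simp only [Set.mem_preimage, Set.mem_Iic, not_le] at hxn
    exact hx (by rw [cut_of_mem hxΩ, hg _ hxn.le])
  exact ⟨HasCompactSupport.of_support_subset_isCompact hKk hsub,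
    (closure_minimal hsub hKc).trans hKΩ⟩

lemma contDiff_cut (D : DomainData Ω U ψ) {g : ℝ → ℝ} (hgs : ContDiff ℝ (⊤ : ℕ∞) g) {ε : ℝ}
    (hε : 0 < ε) (hg : ∀ s, -ε ≤ s → g s = 0) : ContDiff ℝ (⊤ : ℕ∞) (cut Ω ψ g) := by
  obtain ⟨-, h2⟩ := D.tsupport_cut hε hg
  rw [contDiff_iff_contDiffAt]
  intro x
  by_cases hx : x ∈ Ω
  · have h3 : cut Ω ψ g =ᶠ[𝓝 x] fun y => g (ψ y) := by
      filter_upwards [D.isOpen.mem_nhds hx] with y hy using cut_of_mem hy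
    refine ContDiffAt.congr_of_eventuallyEq ?_ h3
    exact hgs.contDiffAt.comp x (D.smooth.contDiffAt (D.isOpen_nhd.mem_nhds (D.subset hx)))
  · have h3 : cut Ω ψ g =ᶠ[𝓝 x] fun _ => 0 :=
      notMem_tsupport_iff_eventuallyEq.mp fun h => hx (h2 h)
    exact contDiffAt_const.congr_of_eventuallyEq h3

lemma differentiableAt (D : DomainData Ω U ψ) {x : E2} (hx : x ∈ U) :
    DifferentiableAt ℝ ψ x :=
  (D.smooth.contDiffAt (D.isOpen_nhd.mem_nhds hx)).differentiableAt (by simp)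

lemma pdR_cut (D : DomainData Ω U ψ) {g g' : ℝ → ℝ} (hg : ∀ s, HasDerivAt g (g' s) s)
    (i : Fin 2) {x : E2} (hx : x ∈ Ω) :
    pdR i (cut Ω ψ g) x = g' (ψ x) * pdR i ψ x := by
  have h3 : cut Ω ψ g =ᶠ[𝓝 x] fun y => g (ψ y) := by
    filter_upwards [D.isOpen.mem_nhds hx] with y hy using cut_of_mem hy
  have h4 := (hg (ψ x)).comp_hasFDerivAt x (D.differentiableAt (D.subset hx)).hasFDerivAt
  have h5 : fderiv ℝ (cut Ω ψ g) x = g' (ψ x) • fderiv ℝ ψ x := by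
    rw [h3.fderiv_eq]; exact h4.fderiv
  simp [pdR, h5]

lemma integrable_of_eq_on (D : DomainData Ω U ψ) {f k : E2 → ℝ} (hk : ContinuousOn k U)
    (hfk : ∀ x ∈ Ω, f x = k x) (hf0 : ∀ x, x ∉ Ω → f x = 0) : Integrable f := by
  rw [← integrableOn_iff_integrable_of_support_subset (s := Ω)]
  · exact (D.integrableOn hk).congr_fun (fun x hx => (hfk x hx).symm) D.isOpen.measurableSet
  · intro x hx
    by_contra hxn
    exact hx (hf0 x hxn)

/-- Green's identity `∫ Δψ g(ψ) = -∫ g'(ψ) |∇ψ|²`; no boundary term appears since `g ∘ ψ` has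
compact support in `Ω`. -/
lemma green (D : DomainData Ω U ψ) {g g' : ℝ → ℝ} (hgs : ContDiff ℝ (⊤ : ℕ∞) g)
    (hgd : ∀ s, HasDerivAt g (g' s) s) {ε : ℝ}
    (hε : 0 < ε) (hg : ∀ s, -ε ≤ s → g s = 0) :
    ∫ x in Ω, lapl ψ x * g (ψ x) =
      -∫ x in Ω, g' (ψ x) * (pdR 0 ψ x ^ 2 + pdR 1 ψ x ^ 2) := by
  obtain ⟨-, h2⟩ := D.tsupport_cut hε hg
  have hg' : Continuous g' := by
    rw [← funext fun s => (hgd s).deriv]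
    exact hgs.continuous_deriv (by simp)
  have hψc : ContinuousOn ψ U := D.smooth.continuousOn
  have hgψ : ContinuousOn (fun x => g (ψ x)) U := hgs.continuous.comp_continuousOn hψc
  have hgψ' : ContinuousOn (fun x => g' (ψ x)) U := hg'.comp_continuousOn hψc
  have hp : ∀ i, ContDiffOn ℝ (⊤ : ℕ∞) (pdR i ψ) U := contDiffOn_pdR D.isOpen_nhd D.smooth
  have hpc : ∀ i, ContinuousOn (pdR i ψ) U := fun i => (hp i).continuousOn
  have hppc : ∀ i, ContinuousOn (pdR i (pdR i ψ)) U := fun i =>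
    (contDiffOn_pdR D.isOpen_nhd (hp i) i).continuousOn
  have hout : ∀ x, x ∉ Ω → cut Ω ψ g x = 0 := fun x hx => Set.indicator_of_notMem hx _
  have hout' : ∀ i x, x ∉ Ω → pdR i (cut Ω ψ g) x = 0 := by
    intro i x hx
    have h4 : fderiv ℝ (cut Ω ψ g) x = 0 :=
      fderiv_of_notMem_tsupport (𝕜 := ℝ) (f := cut Ω ψ g) fun h => hx (h2 h)
    simp [pdR, h4]
  have hI : ∀ i : Fin 2, ∫ x in Ω, g (ψ x) * pdR i (pdR i ψ) x =
      -∫ x in Ω, g' (ψ x) * pdR i ψ x ^ 2 := by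
    intro i
    have h3 := integral_mul_fderiv_eq_neg_fderiv_mul_of_integrable (μ := (volume : Measure E2))
      (f := cut Ω ψ g) (g := pdR i ψ) (v := EuclideanSpace.single i 1)
      (D.integrable_of_eq_on (k := fun x => g' (ψ x) * pdR i ψ x * pdR i ψ x)
        ((hgψ'.mul (hpc i)).mul (hpc i))
        (fun x hx => by
          change pdR i (cut Ω ψ g) x * _ = _
          rw [D.pdR_cut hgd i hx])
        (fun x hx => by
          change pdR i (cut Ω ψ g) x * _ = _
          rw [hout' i x hx, zero_mul]))
      (D.integrable_of_eq_on (k := fun x => g (ψ x) * pdR i (pdR i ψ) x)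
        (hgψ.mul (hppc i))
        (fun x hx => by rw [cut_of_mem hx]; rfl)
        (fun x hx => by rw [hout x hx, zero_mul]))
      (D.integrable_of_eq_on (k := fun x => g (ψ x) * pdR i ψ x)
        (hgψ.mul (hpc i))
        (fun x hx => by rw [cut_of_mem hx])
        (fun x hx => by rw [hout x hx, zero_mul]))
      (fun x _ => (D.contDiff_cut hgs hε hg).differentiable (by simp) x)
      (fun x hx => ((hp i).contDiffAt (D.isOpen_nhd.mem_nhds (D.subset (h2 hx)))).differentiableAt
        (by simp))
    calc ∫ x in Ω, g (ψ x) * pdR i (pdR i ψ) x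
        = ∫ x in Ω, cut Ω ψ g x * pdR i (pdR i ψ) x :=
          setIntegral_congr_fun D.isOpen.measurableSet fun x hx => by simp only [cut_of_mem hx]
      _ = ∫ x, cut Ω ψ g x * pdR i (pdR i ψ) x :=
          setIntegral_eq_integral_of_forall_compl_eq_zero
            fun x hx => by rw [hout x hx, zero_mul]
      _ = -∫ x, pdR i (cut Ω ψ g) x * pdR i ψ x := h3
      _ = -∫ x in Ω, pdR i (cut Ω ψ g) x * pdR i ψ x := by
          rw [setIntegral_eq_integral_of_forall_compl_eq_zero
            fun x hx => by rw [hout' i x hx, zero_mul]]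
      _ = -∫ x in Ω, g' (ψ x) * pdR i ψ x ^ 2 := by
          rw [setIntegral_congr_fun D.isOpen.measurableSet]
          intro x hx
          simp only
          rw [D.pdR_cut hgd i hx]; ring
  have hs1 : ∀ x, lapl ψ x * g (ψ x) =
      g (ψ x) * pdR 0 (pdR 0 ψ) x + g (ψ x) * pdR 1 (pdR 1 ψ) x := by
    intro x; unfold lapl; ring
  simp only [hs1, mul_add]
  have i0 : ∀ i, IntegrableOn (fun x => g (ψ x) * pdR i (pdR i ψ) x) Ω := fun i =>
    D.integrableOn (hgψ.mul (hppc i))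
  have i1 : ∀ i, IntegrableOn (fun x => g' (ψ x) * pdR i ψ x ^ 2) Ω := fun i =>
    D.integrableOn (hgψ'.mul ((hpc i).pow 2))
  rw [integral_add (i0 0) (i0 1), integral_add (i1 0) (i1 1), hI 0, hI 1]
  ring

lemma pdC_cut (D : DomainData Ω U ψ) {g g' : ℝ → ℝ} (hg : ∀ s, HasDerivAt g (g' s) s)
    (i : Fin 2) {x : E2} (hx : x ∈ Ω) :
    pdC i (fun y => (cut Ω ψ g y : ℂ)) x = ((g' (ψ x) * pdR i ψ x : ℝ) : ℂ) := by
  have h3 : cut Ω ψ g =ᶠ[𝓝 x] fun y => g (ψ y) := by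
    filter_upwards [D.isOpen.mem_nhds hx] with y hy using cut_of_mem hy
  have h4 := ((hg (ψ x)).comp_hasFDerivAt x
    (D.differentiableAt (D.subset hx)).hasFDerivAt).congr_of_eventuallyEq h3
  have h5 := Complex.ofRealCLM.hasFDerivAt.comp x h4
  have h6 : fderiv ℝ (fun y => (cut Ω ψ g y : ℂ)) x = _ := h5.fderiv
  simp [pdC, pdR, h6]

/-- The Pauli energy of a real trial function `g ∘ ψ` is a perfect square, by Green's identity
applied to `g²`. -/
lemma pauliQ_cut (D : DomainData Ω U ψ) {B : E2 → ℝ} (hΔ : ∀ x ∈ Ω, lapl ψ x = B x)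
    {g g' : ℝ → ℝ} (hgs : ContDiff ℝ (⊤ : ℕ∞) g)
    (hgd : ∀ s, HasDerivAt g (g' s) s) {ε : ℝ}
    (hε : 0 < ε) (hg : ∀ s, -ε ≤ s → g s = 0) (h : ℝ) :
    pauliQ Ω (fun x => -pdR 1 ψ x) (fun x => pdR 0 ψ x) B h (fun x => (cut Ω ψ g x : ℂ)) =
      ∫ x in Ω, (h * g' (ψ x) + g (ψ x)) ^ 2 * (pdR 0 ψ x ^ 2 + pdR 1 ψ x ^ 2) := by
  have hg' : Continuous g' := by
    rw [← funext fun s => (hgd s).deriv]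
    exact hgs.continuous_deriv (by simp)
  have hψc : ContinuousOn ψ U := D.smooth.continuousOn
  have hgψ : ContinuousOn (fun x => g (ψ x)) U := hgs.continuous.comp_continuousOn hψc
  have hgψ' : ContinuousOn (fun x => g' (ψ x)) U := hg'.comp_continuousOn hψc
  have hpc : ∀ i, ContinuousOn (pdR i ψ) U := fun i =>
    (contDiffOn_pdR D.isOpen_nhd D.smooth i).continuousOn
  have nsq : ∀ a b : ℝ, ‖(a : ℂ) - Complex.I * (b : ℂ)‖ ^ 2 = a ^ 2 + b ^ 2 := by
    intro a b
    rw [← Complex.normSq_eq_norm_sq, Complex.normSq_apply]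
    simp; ring
  have hgr := D.green (g := fun s => g s ^ 2) (g' := fun s => 2 * g s * g' s) (hgs.pow 2)
    (fun s => ((hgd s).fun_pow 2).congr_deriv (by simp)) hε (fun s hs => by simp [hg s hs])
  have hB : ∫ x in Ω, B x * ‖(cut Ω ψ g x : ℂ)‖ ^ 2 = ∫ x in Ω, lapl ψ x * g (ψ x) ^ 2 := by
    refine setIntegral_congr_fun D.isOpen.measurableSet fun x hx => ?_
    simp [cut_of_mem hx, hΔ x hx]
  unfold pauliQ
  rw [hB, hgr, setIntegral_congr_fun D.isOpen.measurableSet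
    (g := fun x => (h ^ 2 * g' (ψ x) ^ 2 + g (ψ x) ^ 2) * (pdR 0 ψ x ^ 2 + pdR 1 ψ x ^ 2)) ?_,
    mul_neg, sub_neg_eq_add, ← integral_const_mul, ← integral_add]
  · congr 1; ext x; ring
  · exact D.integrableOn (((continuousOn_const.mul (hgψ'.pow 2)).add (hgψ.pow 2)).mul
      (((hpc 0).pow 2).add ((hpc 1).pow 2)))
  · exact D.integrableOn (continuousOn_const.mul (((continuousOn_const.mul hgψ).mul hgψ').mul
      (((hpc 0).pow 2).add ((hpc 1).pow 2))))
  · intro x hx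
    simp only [D.pdC_cut hgd _ hx, cut_of_mem hx]
    have e : ∀ a p q r : ℝ, ‖(h : ℂ) * ((a * p : ℝ) : ℂ) - Complex.I * (q : ℂ) * (r : ℂ)‖ ^ 2 =
        (h * (a * p)) ^ 2 + (q * r) ^ 2 := by
      intro a p q r
      rw [← nsq]; push_cast; ring_nf
    rw [e, e]; ring

end DomainData

/-! ### Energy of the trial functions -/

/-- The profile of the trial function: `trial χ h ∘ ψ = e^{-ψ/h} χ(1 - e^{2ψ/h})`. For `χ` the
identity this is `-2 sinh(ψ/h)`, which has exactly the optimal asymptotic energy but vanishes on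
the boundary only; the cutoff `χ` makes it compactly supported. -/
def trial (χ : ℝ → ℝ) (h s : ℝ) : ℝ := Real.exp (-s / h) * χ (1 - Real.exp (2 * s / h))

lemma contDiff_trial {χ : ℝ → ℝ} (hχ : ContDiff ℝ (⊤ : ℕ∞) χ) (h : ℝ) :
    ContDiff ℝ (⊤ : ℕ∞) (trial χ h) := by
  have h1 : ContDiff ℝ (⊤ : ℕ∞) fun s : ℝ => Real.exp (-s / h) :=
    (contDiff_id.neg.div_const h).exp
  have h2 : ContDiff ℝ (⊤ : ℕ∞) fun s : ℝ => 1 - Real.exp (2 * s / h) :=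
    contDiff_const.sub ((contDiff_const.mul contDiff_id).div_const h).exp
  exact h1.mul (hχ.comp h2)

lemma exists_margin {δ h : ℝ} (hδ : 0 < δ) (hδ1 : δ < 1) (hh : 0 < h) :
    ∃ ε > 0, ∀ s, -ε ≤ s → 1 - Real.exp (2 * s / h) ≤ δ := by
  refine ⟨-(h / 2 * Real.log (1 - δ)), ?_, fun s hs => ?_⟩
  · have : Real.log (1 - δ) < 0 := Real.log_neg (by linarith) (by linarith)
    have := mul_neg_of_pos_of_neg (half_pos hh) this
    linarith
  · have h1 : Real.log (1 - δ) ≤ 2 * s / h := by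
      rw [le_div_iff₀ hh]; linarith
    have h2 := Real.exp_le_exp.mpr h1
    rw [Real.exp_log (by linarith)] at h2
    linarith

lemma hasDerivAt_inner (h s : ℝ) :
    HasDerivAt (fun s : ℝ => 1 - Real.exp (2 * s / h)) (-(Real.exp (2 * s / h) * (2 / h))) s := by
  have h1 : HasDerivAt (fun s : ℝ => 2 * s / h) (2 / h) s := by
    simpa using ((hasDerivAt_id s).const_mul 2).div_const h
  simpa using h1.exp.const_sub 1

lemma hasDerivAt_trial {χ θ : ℝ → ℝ} (hχ : ∀ t, HasDerivAt χ (θ t) t) (h s : ℝ) :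
    HasDerivAt (trial χ h)
      (Real.exp (-s / h) * (-1 / h) * χ (1 - Real.exp (2 * s / h)) +
        Real.exp (-s / h) *
          (θ (1 - Real.exp (2 * s / h)) * -(Real.exp (2 * s / h) * (2 / h)))) s := by
  have h1 : HasDerivAt (fun s : ℝ => -s / h) (-1 / h) s := (hasDerivAt_id s).neg.div_const h
  exact h1.exp.mul ((hχ _).comp s (hasDerivAt_inner h s))

namespace DomainData

variable {Ω U : Set E2} {ψ : E2 → ℝ}

/-- The energy of the trial function is `2h ∫ B P(1 - e^{2ψ/h})`, hence at most `2h ∫ B`. -/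
lemma pauliQ_trial (D : DomainData Ω U ψ) {B : E2 → ℝ} (hΔ : ∀ x ∈ Ω, lapl ψ x = B x)
    (hBc : ContinuousOn B U) (hB : ∀ x ∈ Ω, 0 ≤ B x)
    {χ θ P : ℝ → ℝ} {δ : ℝ} (hδ : 0 < δ) (hδ1 : δ < 1)
    (hχs : ContDiff ℝ (⊤ : ℕ∞) χ) (hPs : ContDiff ℝ (⊤ : ℕ∞) P)
    (hχd : ∀ t, HasDerivAt χ (θ t) t) (hPd : ∀ t, HasDerivAt P (θ t ^ 2) t)
    (hχ0 : ∀ t ≤ δ, χ t = 0) (hP0 : ∀ t ≤ δ, P t = 0) (hP1 : ∀ t ≤ 1, P t ≤ 1)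
    {h : ℝ} (hh : 0 < h) :
    0 ≤ pauliQ Ω (fun x => -pdR 1 ψ x) (fun x => pdR 0 ψ x) B h
        (fun x => (cut Ω ψ (trial χ h) x : ℂ)) ∧
      pauliQ Ω (fun x => -pdR 1 ψ x) (fun x => pdR 0 ψ x) B h
        (fun x => (cut Ω ψ (trial χ h) x : ℂ)) ≤ 2 * h * ∫ x in Ω, B x := by
  obtain ⟨ε, hε, hm⟩ := exists_margin hδ hδ1 hh
  have hts := contDiff_trial hχs h
  have htd := hasDerivAt_trial hχd h
  have hFs : ContDiff ℝ (⊤ : ℕ∞) fun s => 2 * h * P (1 - Real.exp (2 * s / h)) :=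
    contDiff_const.mul (hPs.comp
      (contDiff_const.sub ((contDiff_const.mul contDiff_id).div_const h).exp))
  have hgr := D.green (g := fun s => 2 * h * P (1 - Real.exp (2 * s / h)))
    (g' := fun s => 2 * h *
      (θ (1 - Real.exp (2 * s / h)) ^ 2 * -(Real.exp (2 * s / h) * (2 / h)))) hFs
    (fun s => ((hPd _).comp s (hasDerivAt_inner h s)).const_mul (2 * h)) hε
    (fun s hs => by simp [hP0 _ (hm s hs)])
  rw [D.pauliQ_cut hΔ hts htd hε (fun s hs => by simp [trial, hχ0 _ (hm s hs)]) h]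
  have hpt : ∀ s, (h * (Real.exp (-s / h) * (-1 / h) * χ (1 - Real.exp (2 * s / h)) +
        Real.exp (-s / h) *
          (θ (1 - Real.exp (2 * s / h)) * -(Real.exp (2 * s / h) * (2 / h)))) +
        trial χ h s) ^ 2 =
      -(2 * h * (θ (1 - Real.exp (2 * s / h)) ^ 2 * -(Real.exp (2 * s / h) * (2 / h)))) := by
    intro s
    have e1 : Real.exp (2 * s / h) = (Real.exp (-s / h))⁻¹ ^ 2 := by
      rw [← Real.exp_neg, ← Real.exp_nat_mul]; congr 1; push_cast; ring
    have e2 : Real.exp (-s / h) ≠ 0 := (Real.exp_pos _).ne'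
    unfold trial
    rw [e1]
    field_simp
    ring
  refine ⟨integral_nonneg fun x => by positivity, ?_⟩
  simp only [hpt, neg_mul, integral_neg]
  rw [← hgr, ← integral_const_mul]
  have hcP : ContinuousOn (fun x => 2 * h * P (1 - Real.exp (2 * ψ x / h))) U :=
    hFs.continuous.comp_continuousOn D.smooth.continuousOn
  refine le_trans (le_of_eq (setIntegral_congr_fun D.isOpen.measurableSet
    (g := fun x => B x * (2 * h * P (1 - Real.exp (2 * ψ x / h))))
    fun x hx => by simp only [hΔ x hx])) ?_
  refine setIntegral_mono_on (D.integrableOn (hBc.mul hcP))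
    (D.integrableOn (continuousOn_const.mul hBc)) D.isOpen.measurableSet fun x hx => ?_
  have h1 : P (1 - Real.exp (2 * ψ x / h)) ≤ 1 :=
    hP1 _ (by linarith [Real.exp_pos (2 * ψ x / h)])
  nlinarith [mul_nonneg (mul_nonneg zero_le_two hh.le) (hB x hx)]

end DomainData

/-- The quotient of an admissible function with nonnegative energy bounds `lambdaP` from above.
Nonnegativity covers the convention `sInf S = 0` for sets `S` that are unbounded below. -/
lemma lambdaP_le {Ω : Set E2} {A₁ A₂ B : E2 → ℝ} {h : ℝ} {u : E2 → ℂ} (hu : IsCptSmoothIn Ω u)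
    (hu0 : u ≠ 0) (hQ : 0 ≤ pauliQ Ω A₁ A₂ B h u) :
    lambdaP Ω A₁ A₂ B h ≤ pauliQ Ω A₁ A₂ B h u / ∫ x in Ω, ‖u x‖ ^ 2 := by
  unfold lambdaP
  by_cases hb : BddBelow { r | ∃ u : E2 → ℂ, IsCptSmoothIn Ω u ∧ u ≠ 0 ∧
    r = pauliQ Ω A₁ A₂ B h u / ∫ x in Ω, ‖u x‖ ^ 2 }
  · exact csInf_le hb ⟨u, hu, hu0, rfl⟩
  · rw [Real.sInf_of_not_bddBelow hb]
    exact div_nonneg hQ (integral_nonneg fun x => by positivity)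

/-! ### Laplace asymptotics at a minimum -/

lemma fderiv_apply_eq (f : E2 → ℝ) (z y : E2) :
    fderiv ℝ f z y = y 0 * pdR 0 f z + y 1 * pdR 1 f z := by
  have hy : y = y 0 • EuclideanSpace.single (0 : Fin 2) (1 : ℝ) +
      y 1 • EuclideanSpace.single (1 : Fin 2) (1 : ℝ) := by
    ext i; fin_cases i <;> simp
  conv_lhs => rw [hy]
  simp [pdR]

lemma hasDerivAt_line {f : E2 → ℝ} {x y : E2} {t : ℝ}
    (hf : DifferentiableAt ℝ f (x + t • y)) :
    HasDerivAt (fun s : ℝ => f (x + s • y))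
      (y 0 * pdR 0 f (x + t • y) + y 1 * pdR 1 f (x + t • y)) t := by
  have h1 : HasDerivAt (fun s : ℝ => x + s • y) y t := by
    simpa using ((hasDerivAt_id t).smul_const y).const_add x
  have := hf.hasFDerivAt.comp_hasDerivAt t h1
  rwa [fderiv_apply_eq] at this

lemma tendsto_line (x y : E2) : Tendsto (fun t : ℝ => x + t • y) (𝓝 0) (𝓝 x) := by
  have : Continuous fun t : ℝ => x + t • y := by fun_prop
  simpa using this.tendsto 0

lemma tendsto_sqrt_nhdsGT : Tendsto Real.sqrt (𝓝[>] 0) (𝓝[>] 0) := by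
  refine tendsto_nhdsWithin_iff.mpr ⟨?_, ?_⟩
  · have := (Real.continuous_sqrt.tendsto 0).mono_left
      (nhdsWithin_le_nhds (s := Set.Ioi (0:ℝ)))
    simpa using this
  · filter_upwards [self_mem_nhdsWithin] with h hh using Real.sqrt_pos.mpr hh

namespace DomainData

variable {Ω U : Set E2} {ψ : E2 → ℝ}

/-- Second-order Taylor expansion at a critical point. -/
lemma tendsto_taylor (D : DomainData Ω U ψ) {x : E2} (hx : x ∈ Ω) (hcrit : fderiv ℝ ψ x = 0)
    (y : E2) :
    Tendsto (fun h : ℝ => (ψ (x + √h • y) - ψ x) / h) (𝓝[>] 0)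
      (𝓝 (qform (hess ψ x) y / 2)) := by
  set φ' : ℝ → ℝ := fun t => y 0 * pdR 0 ψ (x + t • y) + y 1 * pdR 1 ψ (x + t • y) with hφ'
  have hmem : ∀ᶠ t : ℝ in 𝓝 0, x + t • y ∈ Ω :=
    (tendsto_line x y).eventually (D.isOpen.mem_nhds hx)
  have hp : ∀ i, DifferentiableAt ℝ (pdR i ψ) (x + (0:ℝ) • y) := fun i => by
    refine ((contDiffOn_pdR D.isOpen_nhd D.smooth i).contDiffAt
      (D.isOpen_nhd.mem_nhds (D.subset ?_))).differentiableAt (by simp)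
    simpa using hx
  have hφ2 : HasDerivAt φ' (qform (hess ψ x) y) 0 := by
    have := ((hasDerivAt_line (hp 0)).const_mul (y 0)).add ((hasDerivAt_line (hp 1)).const_mul (y 1))
    refine this.congr_deriv ?_
    simp only [zero_smul, add_zero, qform, hess, Matrix.of_apply]
    ring
  have hφ0 : φ' 0 = 0 := by
    have h1 := fderiv_apply_eq ψ x y
    rw [hcrit] at h1
    simp only [hφ', zero_smul, add_zero]
    simpa using h1.symm
  have hlim : Tendsto (fun t => φ' t / (2 * t)) (𝓝[>] 0) (𝓝 (qform (hess ψ x) y / 2)) := by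
    have h1 := (hasDerivAt_iff_tendsto_slope.mp hφ2).mono_left
      (nhdsWithin_mono 0 (fun t (ht : 0 < t) => ht.ne'))
    refine (h1.div_const 2).congr' ?_
    filter_upwards with t
    simp only [slope, vsub_eq_sub, smul_eq_mul, hφ0, sub_zero]
    ring
  have hL : Tendsto (fun t : ℝ => (ψ (x + t • y) - ψ x) / t ^ 2) (𝓝[>] 0)
      (𝓝 (qform (hess ψ x) y / 2)) := by
    refine HasDerivAt.lhopital_zero_nhdsGT (f' := φ') (g' := fun t => 2 * t) ?_ ?_ ?_ ?_ ?_ hlim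
    · filter_upwards [nhdsWithin_le_nhds hmem] with t ht
      exact (hasDerivAt_line (D.differentiableAt (D.subset ht))).sub_const _
    · filter_upwards with t
      simpa using hasDerivAt_pow 2 t
    · filter_upwards [self_mem_nhdsWithin] with t (ht : 0 < t)
      positivity
    · have h1 : Tendsto (fun t : ℝ => ψ (x + t • y)) (𝓝[>] 0) (𝓝 (ψ x)) :=
        ((D.differentiableAt (D.subset hx)).continuousAt.tendsto.comp
          (tendsto_line x y)).mono_left nhdsWithin_le_nhds
      simpa using h1.sub_const (ψ x)
    · have : Tendsto (fun t : ℝ => t ^ 2) (𝓝 0) (𝓝 (0 ^ 2)) := (continuous_pow 2).tendsto 0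
      simpa using this.mono_left (nhdsWithin_le_nhds (s := Set.Ioi (0:ℝ)))
  refine (hL.comp tendsto_sqrt_nhdsGT).congr' ?_
  filter_upwards [self_mem_nhdsWithin] with h (hh : 0 < h)
  simp [Real.sq_sqrt hh.le]

/-- Laplace asymptotics of the trial density on a ball of radius `R √h` around a minimum. -/
lemma tendsto_laplace (D : DomainData Ω U ψ) {χ : ℝ → ℝ} {δ : ℝ} (hδ : 0 < δ) (hδ1 : δ < 1)
    (hχs : ContDiff ℝ (⊤ : ℕ∞) χ) (hχ0 : ∀ t ≤ δ, χ t = 0)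
    (hχn : ∀ t, 0 ≤ χ t) (hχ1 : ∀ t ≤ 1, χ t ≤ 1)
    {x : E2} (hx : x ∈ Ω) (hmin : ∀ z ∈ Ω, ψ x ≤ ψ z) (hneg : ψ x < 0) (R : ℝ) :
    Tendsto (fun h : ℝ => ∫ y in Metric.ball (0 : E2) R,
        Real.exp (2 * ψ x / h) * cut Ω ψ (trial χ h) (x + √h • y) ^ 2) (𝓝[>] 0)
      (𝓝 (∫ y in Metric.ball (0 : E2) R, χ 1 ^ 2 * Real.exp (-qform (hess ψ x) y))) := by
  have hloc : IsLocalMin ψ x := by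
    filter_upwards [D.isOpen.mem_nhds hx] with z hz using hmin z hz
  have hid : ∀ h > 0, ∀ z ∈ Ω, Real.exp (2 * ψ x / h) * cut Ω ψ (trial χ h) z ^ 2 =
      χ (1 - Real.exp (2 * ψ z / h)) ^ 2 * Real.exp (-(2 * ((ψ z - ψ x) / h))) := by
    intro h hh z hz
    have e : Real.exp (-(2 * ((ψ z - ψ x) / h))) =
        Real.exp (2 * ψ x / h) * Real.exp (-ψ z / h) ^ 2 := by
      rw [← Real.exp_nat_mul, ← Real.exp_add]; congr 1; push_cast; ring
    rw [cut_of_mem hz, e, trial]; ring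
  refine tendsto_integral_filter_of_dominated_convergence (fun _ => 1) ?_ ?_ ?_ ?_
  · filter_upwards [self_mem_nhdsWithin] with h (hh : 0 < h)
    obtain ⟨ε, hε, hm⟩ := exists_margin hδ hδ1 hh
    have hc := (D.contDiff_cut (contDiff_trial hχs h) hε
      (fun s hs => by simp [trial, hχ0 _ (hm s hs)])).continuous
    have : Continuous fun y : E2 =>
        Real.exp (2 * ψ x / h) * cut Ω ψ (trial χ h) (x + √h • y) ^ 2 := by fun_prop
    exact this.aestronglyMeasurable
  · filter_upwards [self_mem_nhdsWithin] with h (hh : 0 < h)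
    filter_upwards with y
    by_cases hz : x + √h • y ∈ Ω
    · rw [hid h hh _ hz, Real.norm_eq_abs, abs_of_nonneg (by positivity)]
      have h1 := hχ1 (1 - Real.exp (2 * ψ (x + √h • y) / h))
        (by linarith [Real.exp_pos (2 * ψ (x + √h • y) / h)])
      have h2 : 0 ≤ (ψ (x + √h • y) - ψ x) / h :=
        div_nonneg (sub_nonneg.mpr (hmin _ hz)) hh.le
      exact mul_le_one₀ (pow_le_one₀ (hχn _) h1) (Real.exp_pos _).le
        (Real.exp_le_one_iff.mpr (by linarith))
    · simp [cut, hz]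
  · exact integrableOn_const measure_ball_lt_top.ne
  · filter_upwards with y
    have hsq : Tendsto (fun h : ℝ => x + √h • y) (𝓝[>] 0) (𝓝 x) :=
      (tendsto_line x y).comp (tendsto_sqrt_nhdsGT.mono_right nhdsWithin_le_nhds)
    have hψ : Tendsto (fun h : ℝ => ψ (x + √h • y)) (𝓝[>] 0) (𝓝 (ψ x)) :=
      (D.differentiableAt (D.subset hx)).continuousAt.tendsto.comp hsq
    have hbot : Tendsto (fun h : ℝ => 2 * ψ (x + √h • y) / h) (𝓝[>] 0) atBot := by
      simp only [div_eq_mul_inv]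
      exact Tendsto.neg_mul_atTop (by linarith) (hψ.const_mul 2) tendsto_inv_nhdsGT_zero
    have hw : Tendsto (fun h : ℝ => 1 - Real.exp (2 * ψ (x + √h • y) / h)) (𝓝[>] 0) (𝓝 1) := by
      simpa using (Real.tendsto_exp_atBot.comp hbot).const_sub 1
    have h1 := ((hχs.continuous.tendsto 1).comp hw).pow 2
    have h2 := (Real.continuous_exp.tendsto _).comp ((D.tendsto_taylor hx hloc.fderiv_eq_zero y).const_mul 2).neg
    have h3 : -(2 * (qform (hess ψ x) y / 2)) = -qform (hess ψ x) y := by ring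
    rw [h3] at h2
    refine (h1.mul h2).congr' ?_
    filter_upwards [self_mem_nhdsWithin, hsq.eventually (D.isOpen.mem_nhds hx)] with h hh hz
    exact (hid h hh _ hz).symm

end DomainData

lemma setIntegral_ball_rescale (f : E2 → ℝ) (x : E2) (R : ℝ) {h : ℝ} (hh : 0 < h) :
    ∫ z in Metric.ball x (√h * R), f z = h * ∫ y in Metric.ball (0 : E2) R, f (x + √h • y) := by
  have hs : 0 < √h := Real.sqrt_pos.mpr hh
  have h1 := Measure.setIntegral_comp_smul_of_pos (volume : Measure E2)
    (fun w => f (x + w)) (Metric.ball (0 : E2) R) hs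
  rw [h1, smul_ball hs.ne', smul_zero, finrank_euclideanSpace, Fintype.card_fin,
    Real.sq_sqrt hh.le, smul_eq_mul, ← mul_assoc, mul_inv_cancel₀ hh.ne', one_mul,
    Real.norm_of_nonneg hs.le]
  have h2 := (measurePreserving_add_left (volume : Measure E2) x).setIntegral_preimage_emb
    (measurableEmbedding_addLeft x) f (Metric.ball x (√h * R))
  rw [← h2]
  congr 2
  ext w; simp [Metric.mem_ball, dist_eq_norm]

/-! ### Sign of the potential and assembly of the bound -/

namespace DomainData

variable {Ω U : Set E2} {ψ : E2 → ℝ}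

lemma lapl_nonpos_of_isLocalMax (D : DomainData Ω U ψ) {x : E2} (hx : x ∈ Ω)
    (hmax : IsLocalMax ψ x) : lapl ψ x ≤ 0 := by
  have hq : ∀ y : E2, qform (hess ψ x) y / 2 ≤ 0 := by
    intro y
    refine le_of_tendsto (D.tendsto_taylor hx hmax.fderiv_eq_zero y) ?_
    have hsq : Tendsto (fun h : ℝ => x + √h • y) (𝓝[>] 0) (𝓝 x) :=
      (tendsto_line x y).comp (tendsto_sqrt_nhdsGT.mono_right nhdsWithin_le_nhds)
    filter_upwards [self_mem_nhdsWithin, hsq.eventually hmax] with h (hh : 0 < h) hz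
    exact div_nonpos_of_nonpos_of_nonneg (sub_nonpos.mpr hz) hh.le
  have h0 := hq (EuclideanSpace.single 0 1)
  have h1 := hq (EuclideanSpace.single 1 1)
  simp only [qform, hess, Matrix.of_apply] at h0 h1
  simp at h0 h1
  unfold lapl
  linarith

/-- Maximum principle for a strictly subharmonic `ψ` with zero boundary values. -/
lemma neg_of_mem (D : DomainData Ω U ψ) (hpos : ∀ x ∈ Ω, 0 < lapl ψ x) {x : E2} (hx : x ∈ Ω) :
    ψ x < 0 := by
  by_contra hcon
  have h0 : 0 ≤ ψ x := not_lt.mp hcon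
  obtain ⟨z, hz, hzmax⟩ := D.bounded.isCompact_closure.exists_isMaxOn ⟨x, subset_closure hx⟩
    (D.smooth.continuousOn.mono D.closure_subset)
  have key : ∀ w ∈ Ω, (∀ v ∈ Ω, ψ v ≤ ψ w) → False := by
    intro w hw hwm
    have hl : IsLocalMax ψ w := by
      filter_upwards [D.isOpen.mem_nhds hw] with v hv using hwm v hv
    linarith [hpos w hw, D.lapl_nonpos_of_isLocalMax hw hl]
  by_cases hzΩ : z ∈ Ω
  · exact key z hzΩ fun v hv => hzmax (subset_closure hv)
  · have hz0 : ψ z = 0 := D.bdry z (by rw [D.isOpen.frontier_eq]; exact ⟨hz, hzΩ⟩)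
    exact key x hx fun v hv => by
      have : ψ v ≤ ψ z := hzmax (subset_closure hv)
      linarith

end DomainData

lemma tendsto_setIntegral_ball {f : E2 → ℝ} (hf : Integrable f) :
    Tendsto (fun n : ℕ => ∫ y in Metric.ball (0 : E2) n, f y) atTop (𝓝 (∫ y, f y)) := by
  have h := tendsto_setIntegral_of_monotone (μ := (volume : Measure E2)) (f := f)
    (s := fun n : ℕ => Metric.ball (0 : E2) n) (fun n => measurableSet_ball)
    (fun m n hmn => Metric.ball_subset_ball (by exact_mod_cast hmn)) hf.integrableOn
  rwa [Metric.iUnion_ball_nat, setIntegral_univ] at h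

/-- Shrinking balls around finitely many distinct points of an open set are eventually pairwise
disjoint and contained in the set. -/
lemma eventually_balls {Ω : Set E2} (hΩ : IsOpen Ω) {N : ℕ} {xs : Fin N → E2}
    (hinj : Function.Injective xs) (hxs : ∀ j, xs j ∈ Ω) (R : ℝ) :
    ∀ᶠ h : ℝ in 𝓝[>] 0, (∀ j, Metric.ball (xs j) (√h * R) ⊆ Ω) ∧
      Pairwise (Function.onFun Disjoint fun j => Metric.ball (xs j) (√h * R)) := by
  have hr : Tendsto (fun h : ℝ => √h * R) (𝓝[>] 0) (𝓝 0) := by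
    simpa using (tendsto_sqrt_nhdsGT.mono_right nhdsWithin_le_nhds).mul_const R
  refine Filter.Eventually.and (eventually_all.mpr fun j => ?_) ?_
  · obtain ⟨ε, hε, hsub⟩ := Metric.isOpen_iff.mp hΩ (xs j) (hxs j)
    filter_upwards [hr.eventually_lt_const hε] with h hh
    exact (Metric.ball_subset_ball hh.le).trans hsub
  · refine eventually_all.mpr fun i => eventually_all.mpr fun j => ?_
    by_cases hij : i = j
    · exact Eventually.of_forall fun h hne => absurd hij hne
    · have hd : 0 < dist (xs i) (xs j) / 2 := half_pos (dist_pos.mpr (hinj.ne hij))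
      filter_upwards [hr.eventually_lt_const hd] with h hh _
      exact Metric.ball_disjoint_ball (by linarith)

/-- The upper bound with any constant `c` strictly below `π Σ_j (det Hess ψ(x_j))^{-1/2}`. -/
lemma eventually_lambdaP_le {Ω U : Set E2} {ψ B : E2 → ℝ} (D : DomainData Ω U ψ)
    (hBc : ContinuousOn B U) (hBpos : ∀ x ∈ Ω, 0 < B x) (hΔ : ∀ x ∈ Ω, lapl ψ x = B x)
    {N : ℕ} {xs : Fin N → E2} (hinj : Function.Injective xs) {m : ℝ}
    (hxs : ∀ j, xs j ∈ Ω) (hxm : ∀ j, ψ (xs j) = m) (hm : ∀ z ∈ Ω, m ≤ ψ z) (hneg : m < 0)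
    (hhess : ∀ j, (hess ψ (xs j)).PosDef) {c : ℝ} (hc0 : 0 < c)
    (hc : c < Real.pi * ∑ j : Fin N, (hess ψ (xs j)).det ^ (-(1:ℝ)/2)) :
    ∀ᶠ h : ℝ in 𝓝[>] 0, Real.exp (-2 * m / h) *
      lambdaP Ω (fun x => -pdR 1 ψ x) (fun x => pdR 0 ψ x) B h ≤ 2 * (∫ x in Ω, B x) / c := by
  set S := ∑ j : Fin N, (hess ψ (xs j)).det ^ (-(1:ℝ)/2) with hS
  obtain ⟨η, hηc, hη0, hη1⟩ : ∃ η : ℝ, c < (1 - η) ^ 2 * (Real.pi * S) ∧ 0 < η ∧ η < 1 := by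
    have h1 : Tendsto (fun η : ℝ => (1 - η) ^ 2 * (Real.pi * S)) (𝓝[>] 0)
        (𝓝 ((1 - 0) ^ 2 * (Real.pi * S))) :=
      ((by fun_prop : Continuous fun η : ℝ => (1 - η) ^ 2 * (Real.pi * S)).tendsto 0).mono_left
        nhdsWithin_le_nhds
    have h2 := h1.eventually_const_lt (u := c) (by simpa using hc)
    have h3 : ∀ᶠ η : ℝ in 𝓝[>] 0, η < 1 :=
      nhdsWithin_le_nhds (Iio_mem_nhds zero_lt_one)
    obtain ⟨η, h4, h5, h6⟩ := (h2.and (h3.and self_mem_nhdsWithin)).exists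
    exact ⟨η, h4, h6, h5⟩
  obtain ⟨χ, θ, P, δ, hδ, hδ1, hχs, hPs, hχd, hPd, hχ0, hP0, hχn, -, hχ1, hP1, hχη⟩ :=
    exists_cutoff hη0 hη1
  -- A radius `R` for which the truncated Gaussian integrals already exceed `c`.
  obtain ⟨R, hR⟩ : ∃ R : ℝ, c < ∑ j : Fin N, ∫ y in Metric.ball (0 : E2) R,
      χ 1 ^ 2 * Real.exp (-qform (hess ψ (xs j)) y) := by
    have h1 : Tendsto (fun n : ℕ => ∑ j : Fin N, ∫ y in Metric.ball (0 : E2) n,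
        χ 1 ^ 2 * Real.exp (-qform (hess ψ (xs j)) y)) atTop
        (𝓝 (∑ j : Fin N, ∫ y : E2, χ 1 ^ 2 * Real.exp (-qform (hess ψ (xs j)) y))) :=
      tendsto_finsetSum _ fun j _ =>
        tendsto_setIntegral_ball ((integrable_exp_neg_qform (hhess j)).const_mul _)
    simp only [integral_const_mul, integral_exp_neg_qform (hhess _), ← Finset.mul_sum] at h1
    have h2 : c < χ 1 ^ 2 * (Real.pi * S) := by
      refine hηc.trans_le (mul_le_mul_of_nonneg_right ?_ (hc0.trans hc).le)
      exact pow_le_pow_left₀ (by linarith) hχη 2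
    obtain ⟨n, hn⟩ := (h1.eventually_const_lt h2).exists
    exact ⟨n, by simpa only [integral_const_mul, ← Finset.mul_sum] using hn⟩
  have hlap : Tendsto (fun h : ℝ => ∑ j : Fin N, ∫ y in Metric.ball (0 : E2) R,
        Real.exp (2 * m / h) * cut Ω ψ (trial χ h) (xs j + √h • y) ^ 2) (𝓝[>] 0)
      (𝓝 (∑ j : Fin N, ∫ y in Metric.ball (0 : E2) R,
        χ 1 ^ 2 * Real.exp (-qform (hess ψ (xs j)) y))) := by
    refine tendsto_finsetSum _ fun j _ => ?_
    have := D.tendsto_laplace hδ hδ1 hχs hχ0 hχn hχ1 (hxs j)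
      (fun z hz => by rw [hxm j]; exact hm z hz) (by rw [hxm j]; exact hneg) R
    rwa [hxm j] at this
  filter_upwards [self_mem_nhdsWithin, hlap.eventually_const_lt hR,
    eventually_balls D.isOpen hinj hxs R] with h (hh : 0 < h) hlt ⟨hsub, hdisj⟩
  obtain ⟨ε, hε, hmarg⟩ := exists_margin hδ hδ1 hh
  have htr0 : ∀ s, -ε ≤ s → trial χ h s = 0 := fun s hs => by simp [trial, hχ0 _ (hmarg s hs)]
  have hts := contDiff_trial hχs h
  have hcs := D.contDiff_cut hts hε htr0
  obtain ⟨hk, hkΩ⟩ := D.tsupport_cut hε htr0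
  set v := cut Ω ψ (trial χ h) with hv
  have hvint : IntegrableOn (fun z => v z ^ 2) Ω := by
    refine (Continuous.integrable_of_hasCompactSupport (by fun_prop) ?_).integrableOn
    exact hk.comp_left (g := fun t : ℝ => t ^ 2) (by norm_num)
  -- The mass of the trial function, bounded below by the balls around the minima.
  have hmass : c * h < Real.exp (2 * m / h) * ∫ z in Ω, v z ^ 2 := by
    have h1 : ∑ j : Fin N, ∫ z in Metric.ball (xs j) (√h * R), v z ^ 2 ≤ ∫ z in Ω, v z ^ 2 := by
      rw [← integral_iUnion_fintype (fun j => measurableSet_ball) hdisj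
        (fun j => hvint.mono_set (hsub j))]
      exact setIntegral_mono_set hvint (Eventually.of_forall fun z => sq_nonneg _)
        (LE.le.eventuallyLE (Set.iUnion_subset hsub))
    simp only [setIntegral_ball_rescale (fun z => v z ^ 2) _ R hh, ← Finset.mul_sum] at h1
    simp only [integral_const_mul, ← Finset.mul_sum] at hlt
    have h2 := mul_le_mul_of_nonneg_left h1 (Real.exp_pos (2 * m / h)).le
    nlinarith [mul_lt_mul_of_pos_right hlt hh]
  have hmpos : 0 < ∫ z in Ω, v z ^ 2 := by
    have := (mul_pos hc0 hh).trans hmass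
    exact pos_of_mul_pos_right this (Real.exp_pos _).le
  obtain ⟨hQ0, hQ⟩ := D.pauliQ_trial hΔ hBc (fun x hx => (hBpos x hx).le) hδ hδ1 hχs hPs hχd hPd
    hχ0 hP0 hP1 hh
  have hadm : IsCptSmoothIn Ω (fun x => (v x : ℂ)) := by
    refine ⟨Complex.ofRealCLM.contDiff.comp hcs, hk.comp_left (g := fun t : ℝ => (t : ℂ)) rfl, ?_⟩
    refine (closure_mono ?_).trans hkΩ
    intro x hx hx0
    exact hx (by simp [hx0])
  have hne : (fun x => (v x : ℂ)) ≠ 0 := by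
    intro h0
    have h1 : ∀ x, v x = 0 := fun x => by simpa using congrFun h0 x
    simp [h1] at hmpos
  have hlam := lambdaP_le hadm hne hQ0
  simp only [Complex.norm_real, Real.norm_eq_abs, sq_abs] at hlam
  have hI : 0 ≤ ∫ x in Ω, B x :=
    setIntegral_nonneg D.isOpen.measurableSet fun x hx => (hBpos x hx).le
  have hexp : Real.exp (-2 * m / h) * Real.exp (2 * m / h) = 1 := by
    rw [← Real.exp_add, ← Real.exp_zero]; congr 1; ring
  have hQ' := hlam.trans (div_le_div_of_nonneg_right hQ hmpos.le)
  calc Real.exp (-2 * m / h) * lambdaP Ω (fun x => -pdR 1 ψ x) (fun x => pdR 0 ψ x) B h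
      ≤ Real.exp (-2 * m / h) * (2 * h * (∫ x in Ω, B x) / ∫ z in Ω, v z ^ 2) :=
        mul_le_mul_of_nonneg_left hQ' (Real.exp_pos _).le
    _ = 2 * h * (∫ x in Ω, B x) / (Real.exp (2 * m / h) * ∫ z in Ω, v z ^ 2) := by
        rw [eq_div_of_mul_eq (Real.exp_pos (2 * m / h)).ne' hexp]
        field_simp
    _ ≤ 2 * h * (∫ x in Ω, B x) / (c * h) :=
        div_le_div_of_nonneg_left (by positivity) (by positivity) hmass.le
    _ = 2 * (∫ x in Ω, B x) / c := by field_simp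

/-- sharp upper bound in the nondegenerate case. If the minimum of `ψ` is
attained at finitely many points, all with positive definite Hessian, then
`limsup_{h→0⁺} e^{−2ψ_min/h} λ_{P₋}(h) ≤ 4Φ (Σ_j (det Hess ψ(x_j))^{−1/2})⁻¹`. -/
theorem stmt6 (Ω : Set E2) (hΩo : IsOpen Ω) (hΩne : Ω.Nonempty)
    (hΩb : Bornology.IsBounded Ω)
    (hsc : SimplyConnectedSpace Ω)
    (hsb : HasSmoothBoundary Ω)
    (U : Set E2) (hU : IsOpen U) (hclU : closure Ω ⊆ U)
    (B ψ : E2 → ℝ)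
    (hBsm : ContDiffOn ℝ (⊤ : ℕ∞) B U) (hBpos : ∀ x ∈ closure Ω, 0 < B x)
    (hψsm : ContDiffOn ℝ (⊤ : ℕ∞) ψ U)
    (hΔ : ∀ x ∈ Ω, lapl ψ x = B x)
    (hbd : ∀ x ∈ frontier Ω, ψ x = 0)
    (N : ℕ) (hN : 0 < N) (xs : Fin N → E2) (hinj : Function.Injective xs)
    (hmins : {x | x ∈ Ω ∧ ψ x = sInf (ψ '' Ω)} = Set.range xs)
    (hhess : ∀ j, (hess ψ (xs j)).PosDef) :
    limsup
      (fun h : ℝ => Real.exp (-2 * sInf (ψ '' Ω) / h) *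
        lambdaP Ω (fun x => -pdR 1 ψ x) (fun x => pdR 0 ψ x) B h)
      (𝓝[>] 0)
      ≤ 4 * ((1 / (2 * Real.pi)) * ∫ x in Ω, B x) *
          (∑ j : Fin N, (hess ψ (xs j)).det ^ (-(1:ℝ)/2))⁻¹ := by
  have D : DomainData Ω U ψ := ⟨hΩo, hΩb, hU, hclU, hψsm, hbd⟩
  have hBΩ : ∀ x ∈ Ω, 0 < B x := fun x hx => hBpos x (subset_closure hx)
  have hbdd : BddBelow (ψ '' Ω) :=
    (hΩb.isCompact_closure.bddBelow_image (hψsm.continuousOn.mono hclU)).mono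
      (Set.image_mono subset_closure)
  set m := sInf (ψ '' Ω) with hm
  have hxs : ∀ j, xs j ∈ Ω ∧ ψ (xs j) = m := fun j => by
    have : xs j ∈ {x | x ∈ Ω ∧ ψ x = m} := hmins ▸ Set.mem_range_self j
    exact this
  have hle : ∀ z ∈ Ω, m ≤ ψ z := fun z hz => csInf_le hbdd ⟨z, hz, rfl⟩
  have hneg : m < 0 := by
    rw [← (hxs ⟨0, hN⟩).2]
    exact D.neg_of_mem (fun x hx => by rw [hΔ x hx]; exact hBΩ x hx) (hxs ⟨0, hN⟩).1
  set S := ∑ j : Fin N, (hess ψ (xs j)).det ^ (-(1:ℝ)/2) with hS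
  have hSpos : 0 < S := by
    have : Nonempty (Fin N) := ⟨⟨0, hN⟩⟩
    exact Finset.sum_pos (fun j _ => Real.rpow_pos_of_pos (hhess j).det_pos _)
      Finset.univ_nonempty
  have hI : 0 ≤ ∫ x in Ω, B x :=
    setIntegral_nonneg hΩo.measurableSet fun x hx => (hBΩ x hx).le
  have hpi := Real.pi_pos
  have hrhs : 4 * ((1 / (2 * Real.pi)) * ∫ x in Ω, B x) * S⁻¹ =
      2 * (∫ x in Ω, B x) / (Real.pi * S) := by
    field_simp; ring
  rw [hrhs, limsup_eq]
  by_cases hb : BddBelow {a | ∀ᶠ h : ℝ in 𝓝[>] 0, Real.exp (-2 * m / h) *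
      lambdaP Ω (fun x => -pdR 1 ψ x) (fun x => pdR 0 ψ x) B h ≤ a}
  · have hlim : Tendsto (fun c : ℝ => 2 * (∫ x in Ω, B x) / c) (𝓝[<] (Real.pi * S))
        (𝓝 (2 * (∫ x in Ω, B x) / (Real.pi * S))) :=
      (tendsto_const_nhds.div tendsto_id (by positivity)).mono_left nhdsWithin_le_nhds
    refine ge_of_tendsto hlim ?_
    have hpS : 0 < Real.pi * S := by positivity
    filter_upwards [self_mem_nhdsWithin, nhdsWithin_le_nhds (Ioi_mem_nhds hpS)] with c hc hc0
    exact csInf_le hb (eventually_lambdaP_le D (hBsm.continuousOn) hBΩ hΔ hinj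
      (fun j => (hxs j).1) (fun j => (hxs j).2) hle hneg hhess hc0 hc)
  · -- By convention `sInf` of a set unbounded below is `0`, which is at most the right side.
    rw [Real.sInf_of_not_bddBelow hb]
    positivity
end
end
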